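/- arXiv:1104.2810 — 5 statements merged into one kernel-verified Lean document; each statement's English description precedes it below -/
import Mathlib

section
/- With weights w_2 = λ > 0 and w_n = (n−1)! for n ≠ 2, the normalized partition function satisfies Z_N / (e^λ (N−1)!) → 1 as N → ∞, where Z_N = (1/N)·Σ_{d_1+⋯+d_N = N−1} ∏_{i=1}^N w_{d_i+1}. -/
open Filter

/-- `Z w N n = Σ_{d_1+⋯+d_N = n} ∏_{i=1}^N w_{d_i+1}` (and `Z w 0 n = [n = 0]`). -/
noncomputable def Z (w : ℕ → ℝ) (N n : ℕ) : ℝ :=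
  ∑ d ∈ Finset.Nat.antidiagonalTuple N n, ∏ i, w (d i + 1)

open PowerSeries in
lemma aux_Z_eq (w : ℕ → ℝ) (N n : ℕ) :
    Z w N n = coeff n ((mk fun d => w (d + 1)) ^ N) := by
  induction N generalizing n with
  | zero =>
    cases n with
    | zero => simp [Z]
    | succ n => simp [Z, PowerSeries.coeff_one]
  | succ N ih =>
    rw [pow_succ', PowerSeries.coeff_mul]
    simp_rw [← ih, coeff_mk, Z, Finset.mul_sum]
    rw [Finset.sum_sigma']
    symm
    refine Finset.sum_bij' (fun x _ => (Fin.cons x.1.1 x.2 : Fin (N+1) → ℕ))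
      (fun d _ => ⟨(d 0, ∑ i, Fin.tail d i), Fin.tail d⟩) ?_ ?_ ?_ ?_ ?_
    · rintro ⟨⟨a, b⟩, d⟩ h
      simp only [Finset.mem_sigma, Finset.HasAntidiagonal.mem_antidiagonal,
        Finset.Nat.mem_antidiagonalTuple] at h ⊢
      rw [Fin.sum_univ_succ]
      simp [h.2, h.1]
    · intro d h
      simp only [Finset.mem_sigma, Finset.HasAntidiagonal.mem_antidiagonal,
        Finset.Nat.mem_antidiagonalTuple] at h ⊢
      rw [Fin.sum_univ_succ] at h
      exact ⟨h, trivial⟩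
    · rintro ⟨⟨a, b⟩, d⟩ h
      simp only [Finset.mem_sigma, Finset.HasAntidiagonal.mem_antidiagonal,
        Finset.Nat.mem_antidiagonalTuple] at h
      obtain ⟨h1, rfl⟩ := h
      simp
    · intro d h
      simp
    · rintro ⟨⟨a, b⟩, d⟩ h
      simp [Fin.prod_univ_succ]

lemma aux_fact (p q : ℕ) : (p + 3).factorial * (q + 3).factorial ≤ 6 * (p + q + 3).factorial := by
  induction q with
  | zero => simp [Nat.factorial]; nlinarith
  | succ q ih =>
    rw [show q + 1 + 3 = (q + 3) + 1 by ring, show p + (q + 1) + 3 = (p + q + 3) + 1 by ring,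
      Nat.factorial_succ (q + 3), Nat.factorial_succ (p + q + 3)]
    calc _ = (q + 3 + 1) * ((p + 3).factorial * (q + 3).factorial) := by ring
      _ ≤ (p + q + 3 + 1) * (6 * (p + q + 3).factorial) := by gcongr; omega
      _ = _ := by ring

lemma aux_conv (r : ℕ) : ∑ x ∈ Finset.HasAntidiagonal.antidiagonal r,
    (x.1 + 2).factorial * (x.2 + 2).factorial ≤ 10 * (r + 2).factorial := by
  rcases r with _ | r
  · simp [Nat.factorial]
  rw [Finset.Nat.sum_antidiagonal_eq_sum_range_succ_mk, Finset.sum_range_succ,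
    Finset.sum_range_succ']
  have h : ∑ k ∈ Finset.range r, (k + 1 + 2).factorial * (r + 1 - (k + 1) + 2).factorial
      ≤ ∑ k ∈ Finset.range r, 6 * (r + 2).factorial := by
    apply Finset.sum_le_sum
    intro k hk
    rw [Finset.mem_range] at hk
    obtain ⟨q, rfl⟩ := Nat.exists_eq_add_of_lt hk
    have := aux_fact k q
    convert this using 3
    congr 1; omega
  simp only [Finset.sum_const, Finset.card_range, smul_eq_mul] at h
  have e1 : (r + 1 + 2).factorial = (r + 3) * (r + 2).factorial := Nat.factorial_succ (r + 2)
  simp only [Nat.sub_self, Nat.sub_zero, zero_add, Nat.factorial_two]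
  rw [e1]
  nlinarith [h, Nat.factorial_pos (r + 2)]

open PowerSeries in
/-- series of `(d+2)!` -/
noncomputable def auxK : PowerSeries ℝ := mk fun d => ((d + 2).factorial : ℝ)

open PowerSeries in
lemma auxK_coeff_nonneg (j r : ℕ) : 0 ≤ coeff r (auxK ^ j) := by
  induction j generalizing r with
  | zero => rw [pow_zero, PowerSeries.coeff_one]; split_ifs <;> norm_num
  | succ j ih =>
    rw [pow_succ, PowerSeries.coeff_mul]
    refine Finset.sum_nonneg fun x _ => mul_nonneg (ih _) ?_
    simp [auxK]

open PowerSeries in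
lemma auxK_coeff_le (j r : ℕ) : coeff r (auxK ^ (j + 1)) ≤ 10 ^ j * ((r + 2).factorial : ℝ) := by
  induction j generalizing r with
  | zero => simp [auxK]
  | succ j ih =>
    rw [pow_succ, PowerSeries.coeff_mul]
    have h := aux_conv r
    have h' : ∑ x ∈ Finset.HasAntidiagonal.antidiagonal r,
      ((x.1 + 2).factorial : ℝ) * ((x.2 + 2).factorial : ℝ) ≤ 10 * ((r + 2).factorial : ℝ) := by
      exact_mod_cast h
    calc _ ≤ ∑ x ∈ Finset.HasAntidiagonal.antidiagonal r,
          10 ^ j * ((x.1 + 2).factorial : ℝ) * ((x.2 + 2).factorial : ℝ) := by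
          apply Finset.sum_le_sum
          intro x _
          have : coeff x.2 auxK = ((x.2 + 2).factorial : ℝ) := by simp [auxK]
          rw [this]
          gcongr
          exact ih _
      _ = 10 ^ j * ∑ x ∈ Finset.HasAntidiagonal.antidiagonal r,
          ((x.1 + 2).factorial : ℝ) * ((x.2 + 2).factorial : ℝ) := by
          rw [Finset.mul_sum]; simp_rw [mul_assoc]
      _ ≤ 10 ^ j * (10 * ((r + 2).factorial : ℝ)) := by gcongr
      _ = _ := by ring

open PowerSeries in
/-- normalized coefficient -/
noncomputable def auxb (m : ℕ) : ℝ := coeff (m - 1) ((X ^ 2 * auxK + 1) ^ m) / m.factorial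

open PowerSeries in
/-- summand -/
noncomputable def auxt (m j : ℕ) : ℝ :=
  (if 2 * j ≤ m - 1 then coeff (m - 1 - 2 * j) (auxK ^ j) else 0) * (m.choose j) / m.factorial

open PowerSeries in
lemma auxb_eq (m : ℕ) : auxb m = ∑ j ∈ Finset.range (m + 1), auxt m j := by
  rw [auxb, add_pow, map_sum, Finset.sum_div]
  refine Finset.sum_congr rfl fun j _ => ?_
  rw [auxt, one_pow, mul_one, mul_pow, ← pow_mul, ← map_natCast (C (R := ℝ)), coeff_mul_C,
    coeff_X_pow_mul']

lemma auxt_nonneg (m j : ℕ) : 0 ≤ auxt m j := by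
  unfold auxt
  have := auxK_coeff_nonneg j (m - 1 - 2 * j)
  split_ifs <;> positivity

lemma auxt_le (p j : ℕ) : auxt (p + 3) (j + 2) ≤ 20 / (p + 3) * (10 ^ j / j.factorial) := by
  unfold auxt
  split_ifs with h
  · obtain ⟨i, rfl⟩ : ∃ i, p = i + 2 * j + 2 := ⟨p - 2 * j - 2, by omega⟩
    rw [show i + 2 * j + 2 + 3 - 1 - 2 * (j + 2) = i by omega,
      Nat.cast_choose ℝ (show j + 2 ≤ i + 2 * j + 2 + 3 by omega),
      show i + 2 * j + 2 + 3 - (j + 2) = i + j + 2 + 1 by omega]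
    have h1 := auxK_coeff_le (j + 1) i
    have h2 : (j.factorial : ℝ) ≤ ((j + 2).factorial : ℝ) := by
      exact_mod_cast Nat.factorial_le (by omega)
    have h3 : ((i + 2).factorial : ℝ) ≤ ((i + j + 2).factorial : ℝ) := by
      exact_mod_cast Nat.factorial_le (by omega)
    have e : ((i + j + 2 + 1).factorial : ℝ) = (i + j + 3) * ((i + j + 2).factorial : ℝ) := by
      rw [Nat.factorial_succ]; push_cast; ring
    rw [e]
    have hm : (0:ℝ) < ((i + 2 * j + 2 + 3).factorial : ℝ) := by positivity
    have hq : (0:ℝ) < ((i + j + 2).factorial : ℝ) := by positivity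
    have hj : (0:ℝ) < (j.factorial : ℝ) := by positivity
    calc _ = PowerSeries.coeff i (auxK ^ (j + 2)) /
            (((j + 2).factorial : ℝ) * ((i + j + 3) * ((i + j + 2).factorial : ℝ))) := by
          field_simp
      _ ≤ (10 ^ (j + 1) * ((i + j + 2).factorial : ℝ)) /
            ((j.factorial : ℝ) * ((i + j + 3) * ((i + j + 2).factorial : ℝ))) := by
          gcongr
          exact h1.trans (by gcongr)
      _ = 20 / (2 * (i + j + 3)) * (10 ^ j / j.factorial) := by
          field_simp; ring
      _ ≤ _ := by
          gcongr
          push_cast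
          linarith
  · simp only [zero_mul, zero_div]; positivity

open PowerSeries in
lemma auxb_bound (p : ℕ) : 1 ≤ auxb (p + 3) ∧
    auxb (p + 3) ≤ 1 + 20 / ((p + 3 : ℕ) : ℝ) * Real.exp 10 := by
  have h0 : auxt (p + 3) 0 = 0 := by simp [auxt, PowerSeries.coeff_one]
  have h1 : auxt (p + 3) 1 = 1 := by
    simp only [auxt, pow_one, mul_one, Nat.choose_one_right]
    rw [if_pos (by omega), show p + 3 - 1 - 2 = p by omega, Nat.factorial_succ (p + 2)]
    simp only [auxK, coeff_mk]
    have hj : (0:ℝ) < ((p + 2).factorial : ℝ) := by positivity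
    push_cast
    field_simp
    ring
  have e : auxb (p + 3) = ∑ j ∈ Finset.range (p + 2), auxt (p + 3) (j + 2) + 1 := by
    rw [auxb_eq, Finset.sum_range_succ', Finset.sum_range_succ', h0, zero_add, h1, add_zero]
  rw [e]
  constructor
  · have := Finset.sum_nonneg (s := Finset.range (p + 2))
      (fun j _ => auxt_nonneg (p + 3) (j + 2))
    linarith
  · have : ∑ j ∈ Finset.range (p + 2), auxt (p + 3) (j + 2) ≤
        20 / (p + 3) * ∑ j ∈ Finset.range (p + 2), (10:ℝ) ^ j / j.factorial := by
      rw [Finset.mul_sum]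
      exact Finset.sum_le_sum fun j _ => auxt_le p j
    have h2 := Real.sum_le_exp_of_nonneg (x := 10) (by norm_num) (p + 2)
    have h3 : 20 / ((p:ℝ) + 3) * ∑ j ∈ Finset.range (p + 2), (10:ℝ) ^ j / j.factorial ≤
      20 / ((p:ℝ) + 3) * Real.exp 10 := by gcongr
    push_cast
    linarith

lemma auxb_tendsto : Tendsto auxb atTop (nhds 1) := by
  have hu : Tendsto (fun n : ℕ => 1 + 20 / (n : ℝ) * Real.exp 10) atTop (nhds 1) := by
    have := ((tendsto_const_div_atTop_nhds_zero_nat (20:ℝ)).mul_const (Real.exp 10)).const_add 1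
    simpa using this
  refine tendsto_of_tendsto_of_tendsto_of_le_of_le' tendsto_const_nhds hu ?_ ?_
  · filter_upwards [eventually_ge_atTop 3] with n hn
    obtain ⟨p, rfl⟩ := Nat.exists_eq_add_of_le' hn
    exact (auxb_bound p).1
  · filter_upwards [eventually_ge_atTop 3] with n hn
    obtain ⟨p, rfl⟩ := Nat.exists_eq_add_of_le' hn
    exact (auxb_bound p).2

/-- summand of the final convolution -/
noncomputable def auxf (l : ℝ) (N k : ℕ) : ℝ :=
  if k < N then l ^ k / k.factorial * auxb (N - k) else 0

open PowerSeries in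
lemma aux_main (l : ℝ) (N : ℕ) :
    Z (fun n => if n = 2 then l else ((n - 1).factorial : ℝ)) (N + 1) N / ((N + 1 : ℕ) : ℝ) /
      (N.factorial : ℝ) = ∑' k, auxf l (N + 1) k := by
  have hF : (mk fun d => (fun n => if n = 2 then l else ((n - 1).factorial : ℝ)) (d + 1)) =
      X * C l + (X ^ 2 * auxK + 1) := by
    ext d
    rcases d with _ | _ | d
    · simp [coeff_X_pow_mul']
    · simp [coeff_X_pow_mul', PowerSeries.coeff_one, coeff_mul_C]
    · simp [coeff_X_pow_mul', PowerSeries.coeff_one, coeff_mul_C, auxK, coeff_X]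
  rw [aux_Z_eq, hF, add_pow, map_sum, tsum_eq_sum (s := Finset.range (N + 1 + 1)),
    Finset.sum_div, Finset.sum_div]
  · refine Finset.sum_congr rfl fun k hk => ?_
    rw [mul_pow, ← map_natCast (C (R := ℝ)), coeff_mul_C, mul_assoc, coeff_X_pow_mul',
      ← map_pow, coeff_C_mul, auxf]
    by_cases h : k < N + 1
    · rw [if_pos (by omega), if_pos h, auxb, Nat.cast_choose ℝ h.le, Nat.factorial_succ,
        show N + 1 - k - 1 = N - k by omega]
      have := Nat.factorial_pos N
      push_cast
      have h1 : (N:ℝ) + 1 ≠ 0 := by positivity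
      have h2 : (N.factorial:ℝ) ≠ 0 := by positivity
      field_simp
    · rw [if_neg (by omega), if_neg h]; simp
  · intro k hk
    rw [Finset.mem_range] at hk
    rw [auxf, if_neg (by omega)]

lemma auxf_tendsto (l : ℝ) (hl : 0 < l) :
    Tendsto (fun N => ∑' k, auxf l N k) atTop (nhds (Real.exp l)) := by
  obtain ⟨M, hM⟩ := auxb_tendsto.norm.bddAbove_range
  have hM' : ∀ m, ‖auxb m‖ ≤ M := fun m => hM ⟨m, rfl⟩
  have hs : Summable fun k : ℕ => l ^ k / k.factorial := Real.summable_pow_div_factorial l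
  have he : Real.exp l = ∑' k : ℕ, l ^ k / k.factorial := by
    rw [Real.exp_eq_exp_ℝ, NormedSpace.exp_eq_tsum_div]
  rw [he]
  refine tendsto_tsum_of_dominated_convergence (bound := fun k => l ^ k / k.factorial * M)
    (hs.mul_right M) ?_ ?_
  · intro k
    have h : Tendsto (fun N => l ^ k / k.factorial * auxb (N - k)) atTop
        (nhds (l ^ k / k.factorial * 1)) :=
      (auxb_tendsto.comp (tendsto_sub_atTop_nat k)).const_mul _
    rw [mul_one] at h
    refine h.congr' ?_
    filter_upwards [eventually_gt_atTop k] with N hN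
    rw [auxf, if_pos hN]
  · refine Eventually.of_forall fun N k => ?_
    have hM0 : 0 ≤ M := (norm_nonneg _).trans (hM' 0)
    rw [auxf]
    split_ifs
    · rw [norm_mul, Real.norm_of_nonneg (by positivity : 0 ≤ l ^ k / (k.factorial:ℝ))]
      gcongr
      exact hM' _
    · rw [norm_zero]; positivity

/-- Theorem 2, partition function asymptotics: with `w_2 = λ` and `w_n = (n−1)!` otherwise,
`Z_N / (e^λ (N−1)!) → 1`, where `Z_N = Z(N,N−1)/N`. -/
theorem stmt_5 (l : ℝ) (hl : 0 < l) :
    Tendsto (fun N : ℕ =>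
        (Z (fun n => if n = 2 then l else ((n - 1).factorial : ℝ)) N (N - 1) / N) /
          (Real.exp l * ((N - 1).factorial : ℝ)))
      atTop (nhds 1) := by
  have h := (auxf_tendsto l hl).div_const (Real.exp l)
  rw [div_self (Real.exp_ne_zero l)] at h
  refine h.congr' ?_
  filter_upwards [eventually_ge_atTop 1] with N hN
  obtain ⟨n, rfl⟩ := Nat.exists_eq_add_of_le' hN
  rw [← aux_main, Nat.add_sub_cancel, div_div _ _ (Real.exp l), mul_comm (Real.exp l)]
end

section
/- With weights w_2 = λ and w_n = (n−1)! for n ≠ 2, for each fixed j ≥ 0 the quantity (1/Z_N)·C(N−j−1, j)·λ^j·(N−j−1)! converges to e^{−λ} λ^j / j! as N → ∞. Consequently, the random variable N − σ(s) (N minus the degree of the vertex next to the root of the random simply generated tree T_N) converges in distribution to Poisson(λ). -/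
open Filter

/-- Rooted planar trees (the tree hanging from the vertex `s` next to the root `r`;
the full tree of the paper with `N` edges corresponds to a `PTree` with `N` vertices,
plus the extra root `r` of degree 1 attached to the root `s` of the `PTree`). -/
inductive PTree : Type where
  | node : List PTree → PTree

namespace PTree

/-- The (ordered) subtrees attached to the root. -/
def children : PTree → List PTree
  | node ts => ts

/-- Number of vertices of the `PTree`, i.e. the number `N` of edges of the paper's tree. -/
def size : PTree → ℕ
  | node ts => 1 + (ts.attach.map (fun t => size t.1)).sum
decreasing_by simp [PTree.node.sizeOf_spec]; have := List.sizeOf_lt_of_mem t.2; omega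

/-- The weight `∏_{v ≠ r} w_{σ(v)}`: every vertex `v ≠ r` has degree `outdeg(v) + 1`. -/
noncomputable def weight (w : ℕ → ℝ) : PTree → ℝ
  | node ts => w (ts.length + 1) * (ts.attach.map (fun t => weight w t.1)).prod
decreasing_by simp [PTree.node.sizeOf_spec]; have := List.sizeOf_lt_of_mem t.2; omega

/-- The number of vertices of outdegree `k`, i.e. the number `X_{k+1}` of vertices
(other than `r`) of degree `k+1`. -/
def countOutdeg (k : ℕ) : PTree → ℕ
  | node ts => (if ts.length = k then 1 else 0) + (ts.attach.map (fun t => countOutdeg k t.1)).sum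
decreasing_by simp [PTree.node.sizeOf_spec]; have := List.sizeOf_lt_of_mem t.2; omega

/-- The maximal outdegree of a vertex of the tree. -/
def maxOutdeg : PTree → ℕ
  | node ts => max ts.length ((ts.attach.map (fun t => maxOutdeg t.1)).foldr max 0)
decreasing_by simp [PTree.node.sizeOf_spec]; have := List.sizeOf_lt_of_mem t.2; omega

/-- Outdegree of the first (leftmost) child `s₁` of `s` (0 if there is none). -/
def firstChildOutdeg : PTree → ℕ
  | node [] => 0
  | node (t :: _) => t.children.length

end PTree

/-- The partition function `Z_N = Σ_{τ ∈ Γ_N} ∏_{v ∈ V(τ)∖{r}} w_{σ(v)}`. -/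
noncomputable def Zfun (w : ℕ → ℝ) (N : ℕ) : ℝ :=
  ∑' t : {t : PTree // t.size = N}, t.1.weight w

/-- `ν_N(P)`: probability of the event `P` under the simply generated measure `ν_N`. -/
noncomputable def nu (w : ℕ → ℝ) (N : ℕ) (P : PTree → Prop) : ℝ :=
  (∑' t : {t : PTree // t.size = N ∧ P t}, t.1.weight w) / Zfun w N


section helpers
open Finset PTree

theorem size_node (ts : List PTree) : (node ts).size = 1 + (ts.map size).sum := by
  rw [size, List.attach_map_val]

theorem weight_node (w : ℕ → ℝ) (ts : List PTree) :
    (node ts).weight w = w (ts.length + 1) * (ts.map (weight w)).prod := by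
  rw [weight, List.attach_map_val]

theorem size_pos' (t : PTree) : 1 ≤ t.size := by
  cases t; rw [size_node]; omega

theorem length_le_size (l : List PTree) : l.length ≤ (l.map size).sum := by
  induction l with
  | nil => simp
  | cons t l ih => have := size_pos' t; simp; omega

open Classical in
noncomputable def forests : ℕ → ℕ → Finset (List PTree)
  | 0, 0 => {[]}
  | 0, _ + 1 => ∅
  | _ + 1, 0 => ∅
  | n + 1, k + 1 => (range (n + 1)).biUnion fun i =>
      (forests n (k + i)).image (fun l => node (l.take i) :: l.drop i)

theorem mem_forests (n : ℕ) : ∀ (k : ℕ) (l : List PTree),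
    l ∈ forests n k ↔ l.length = k ∧ (l.map size).sum = n := by
  induction n with
  | zero =>
    intro k l
    rcases k with _ | k
    · simp only [forests, Finset.mem_singleton]
      constructor
      · rintro rfl; simp
      · rintro ⟨h, -⟩; exact List.length_eq_zero_iff.1 h
    · simp only [forests, Finset.notMem_empty, false_iff]
      rintro ⟨h, h'⟩
      have := length_le_size l
      omega
  | succ n ih =>
    intro k l
    rcases k with _ | k
    · simp only [forests, Finset.notMem_empty, false_iff]
      rintro ⟨h, h'⟩
      rw [List.length_eq_zero_iff.1 h] at h'
      simp at h'
    · simp only [forests, Finset.mem_biUnion, Finset.mem_image, ih, Finset.mem_range]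
      constructor
      · rintro ⟨i, hi, l, ⟨h1, h2⟩, rfl⟩
        refine ⟨by simp; omega, ?_⟩
        rw [List.map_cons, List.sum_cons, size_node, add_assoc, ← List.sum_append, ← List.map_append,
          List.take_append_drop, h2, add_comm]
      · rintro ⟨h1, h2⟩
        rcases l with _ | ⟨⟨ts⟩, l⟩
        · simp at h1
        · rw [List.map_cons, List.sum_cons, size_node] at h2
          have := length_le_size ts
          refine ⟨ts.length, by omega, ts ++ l, ⟨?_, ?_⟩, by simp⟩
          · simp at h1 ⊢; omega
          · rw [List.map_append, List.sum_append]; omega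

noncomputable def SS (w : ℕ → ℝ) (n k : ℕ) : ℝ := ∑ l ∈ forests n k, (l.map (weight w)).prod

theorem SS_eq_zero (w : ℕ → ℝ) (n k : ℕ) (h : n < k) : SS w n k = 0 := by
  unfold SS
  have : forests n k = ∅ := by
    ext l
    simp only [mem_forests, Finset.notMem_empty, iff_false]
    rintro ⟨h1, h2⟩
    have := length_le_size l
    omega
  rw [this]; simp

theorem SS_succ (w : ℕ → ℝ) (n k : ℕ) :
    SS w (n + 1) (k + 1) = ∑ i ∈ range (n + 1), w (i + 1) * SS w n (k + i) := by
  classical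
  unfold SS
  rw [forests, Finset.sum_biUnion]
  · refine Finset.sum_congr rfl fun i hi => ?_
    rw [Finset.sum_image, Finset.mul_sum]
    · refine Finset.sum_congr rfl fun l hl => ?_
      rw [mem_forests] at hl
      rw [List.map_cons, List.prod_cons, weight_node, mul_assoc, ← List.prod_append,
        ← List.map_append, List.take_append_drop, List.length_take, min_eq_left (by omega)]
    · intro a ha b hb hab
      simp only [List.cons.injEq, PTree.node.injEq] at hab
      rw [← List.take_append_drop i a, ← List.take_append_drop i b, hab.1, hab.2]
  · intro i hi i' hi' hne
    rw [Function.onFun, Finset.disjoint_left]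
    intro l h1 h2
    simp only [Finset.mem_image, mem_forests] at h1 h2
    obtain ⟨a, ⟨ha, _⟩, rfl⟩ := h1
    obtain ⟨b, ⟨hb, _⟩, hab⟩ := h2
    simp only [List.cons.injEq, PTree.node.injEq] at hab
    have := congrArg List.length hab.1
    simp at this
    omega

theorem SS_zero_right (w : ℕ → ℝ) (n : ℕ) : SS w (n + 1) 0 = 0 := by
  simp [SS, forests]

theorem SS_zero_zero (w : ℕ → ℝ) : SS w 0 0 = 1 := by
  simp [SS, forests]

theorem tsum_tree (w : ℕ → ℝ) (P : PTree → Prop) (s : Finset PTree) (h : ∀ t, t ∈ s ↔ P t) :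
    ∑' t : {t : PTree // P t}, t.1.weight w = ∑ t ∈ s, t.weight w := by
  have : P = fun t => t ∈ s := by ext t; rw [h]
  subst this
  exact Finset.tsum_subtype s (weight w)

theorem Zfun_eq (w : ℕ → ℝ) (n : ℕ) : Zfun w n = SS w n 1 := by
  classical
  unfold Zfun
  rw [tsum_tree w _ ((forests n 1).image (fun l => l.headD (node [])))]
  · rw [Finset.sum_image]
    · unfold SS
      refine Finset.sum_congr rfl fun l hl => ?_
      rw [mem_forests, List.length_eq_one_iff] at hl
      obtain ⟨⟨t, rfl⟩, _⟩ := hl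
      simp
    · intro a ha b hb hab
      simp only [Finset.mem_coe, mem_forests, List.length_eq_one_iff] at ha hb
      obtain ⟨⟨t, rfl⟩, _⟩ := ha
      obtain ⟨⟨t', rfl⟩, _⟩ := hb
      simpa using hab
  · intro t
    simp only [Finset.mem_image, mem_forests, List.length_eq_one_iff]
    constructor
    · rintro ⟨l, ⟨⟨t, rfl⟩, h⟩, rfl⟩
      simpa using h
    · intro h
      exact ⟨[t], ⟨⟨t, rfl⟩, by simpa using h⟩, by simp⟩

theorem nu_eq (w : ℕ → ℝ) (n j : ℕ) (hj : j ≤ n) :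
    nu w (n + 1) (fun t => n + 1 - (t.children.length + 1) = j) =
      w (n - j + 1) * SS w n (n - j) / Zfun w (n + 1) := by
  classical
  unfold nu
  congr 1
  rw [tsum_tree w _ ((forests n (n - j)).image node)]
  · rw [Finset.sum_image (by intro a _ b _ h; simpa using h)]
    unfold SS
    rw [Finset.mul_sum]
    refine Finset.sum_congr rfl fun l hl => ?_
    rw [mem_forests] at hl
    rw [weight_node, hl.1]
  · rintro ⟨ts⟩
    have := length_le_size ts
    simp only [Finset.mem_image, mem_forests, PTree.node.injEq, exists_eq_right, size_node, children]
    omega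

open PowerSeries in
theorem lagrange (w : ℕ → ℝ) (Φ : PowerSeries ℝ) (hΦ : ∀ i, coeff i Φ = w (i + 1)) (n : ℕ) :
    ∀ k j : ℕ, k + j = n + 1 →
    ((n : ℝ) + 1) * SS w (n + 1) k = k * coeff j (Φ ^ (n + 1)) := by
  induction n with
  | zero =>
    intro k j h
    rcases k with _ | k
    · simp [SS_zero_right]
    · obtain rfl : k = 0 := by omega
      obtain rfl : j = 0 := by omega
      rw [SS_succ]
      have := hΦ 0
      simp [SS_zero_zero] at this ⊢
      exact this.symm
  | succ n ih =>
    intro k j h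
    rcases k with _ | k
    · simp [SS_zero_right]
    · have hkj : k + j = n + 1 := by omega
      have e1 : SS w (n + 1 + 1) (k + 1) = ∑ i ∈ range (j + 1), w (i + 1) * SS w (n + 1) (k + i) := by
        rw [SS_succ]
        symm
        apply Finset.sum_subset
        · intro i; simp; omega
        · intro i _ hi
          rw [SS_eq_zero _ _ _ (by simp at hi; omega), mul_zero]
      have e2 : ((n : ℝ) + 1) * SS w (n + 1 + 1) (k + 1) =
          ∑ i ∈ range (j + 1), w (i + 1) * ((k + i : ℝ) * coeff (j - i) (Φ ^ (n + 1))) := by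
        rw [e1, Finset.mul_sum]
        refine Finset.sum_congr rfl fun i hi => ?_
        simp at hi
        have := ih (k + i) (j - i) (by omega)
        push_cast at this
        rw [← this]; ring
      have e3 : coeff j (Φ ^ (n + 1 + 1)) =
          ∑ i ∈ range (j + 1), w (i + 1) * coeff (j - i) (Φ ^ (n + 1)) := by
        rw [pow_succ', coeff_mul, Finset.Nat.sum_antidiagonal_eq_sum_range_succ_mk]
        simp [hΦ]
      have e4 : coeff j (X * d⁄dX ℝ Φ * Φ ^ (n + 1)) =
          ∑ i ∈ range (j + 1), w (i + 1) * ((i : ℝ) * coeff (j - i) (Φ ^ (n + 1))) := by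
        rw [coeff_mul, Finset.Nat.sum_antidiagonal_eq_sum_range_succ_mk]
        refine Finset.sum_congr rfl fun i hi => ?_
        rcases i with _ | i
        · simp
        · simp [coeff_succ_X_mul, coeff_derivative, hΦ]; ring
      have e5 : ((n : ℝ) + 2) * coeff j (X * d⁄dX ℝ Φ * Φ ^ (n + 1)) =
          j * coeff j (Φ ^ (n + 1 + 1)) := by
        have h1 : d⁄dX ℝ (Φ ^ (n + 2)) = C ((n : ℝ) + 2) * (d⁄dX ℝ Φ * Φ ^ (n + 1)) := by
          have := Derivation.leibniz_pow (d⁄dX ℝ) Φ (n + 2)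
          simp only [smul_eq_mul, nsmul_eq_mul] at this
          have h2 : (C (2 : ℝ) : PowerSeries ℝ) = 2 := map_ofNat _ 2
          rw [this]
          rw [map_add, h2, map_natCast]
          push_cast
          ring
        rw [← coeff_C_mul]
        have h2 : C ((n : ℝ) + 2) * (X * d⁄dX ℝ Φ * Φ ^ (n + 1)) =
            X * d⁄dX ℝ (Φ ^ (n + 2)) := by rw [h1]; ring
        rw [h2]
        rcases j with _ | j
        · simp
        · rw [coeff_succ_X_mul, coeff_derivative]; push_cast; ring
      have e6 : ((n : ℝ) + 1) * SS w (n + 1 + 1) (k + 1) =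
          k * coeff j (Φ ^ (n + 1 + 1)) + coeff j (X * d⁄dX ℝ Φ * Φ ^ (n + 1)) := by
        rw [e2, e3, e4, Finset.mul_sum, ← Finset.sum_add_distrib]
        refine Finset.sum_congr rfl fun i hi => ?_
        ring
      have hn : ((n : ℝ) + 1) ≠ 0 := by positivity
      have hc : (k : ℝ) + j = n + 1 := by exact_mod_cast hkj
      apply mul_left_cancel₀ hn
      push_cast
      have hj : (j : ℝ) = n + 1 - k := by linarith
      rw [hj] at e5
      linear_combination ((n : ℝ) + 2) * e6 + e5

end helpers

section analysis
open Finset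

theorem fac_mul (c a b : ℕ) (ha : c ≤ a) (hb : c ≤ b) :
    a.factorial * b.factorial ≤ c.factorial * (a + b - c).factorial := by
  induction a, ha using Nat.le_induction with
  | base => rw [Nat.add_sub_cancel_left]
  | succ a ha ih =>
    have e : a + 1 + b - c = (a + b - c) + 1 := by omega
    rw [e, Nat.factorial_succ, Nat.factorial_succ (a + b - c)]
    calc (a + 1) * a.factorial * b.factorial = (a + 1) * (a.factorial * b.factorial) := by ring
      _ ≤ (a + b - c + 1) * (c.factorial * (a + b - c).factorial) := 
          Nat.mul_le_mul (by omega) ih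
      _ = _ := by ring

theorem mid_bound (f : ℕ) : ∑ p ∈ antidiagonal f, (p.1 + 2).factorial * (p.2 + 2).factorial
    ≤ 10 * (f + 2).factorial := by
  rcases f with _ | _ | f
  · decide
  · decide
  · rw [Finset.Nat.sum_antidiagonal_succ, Finset.Nat.sum_antidiagonal_succ']
    have h : ∑ p ∈ antidiagonal f, (p.1 + 1 + 2).factorial * (p.2 + 1 + 2).factorial ≤
        ∑ p ∈ antidiagonal f, 6 * (f + 3).factorial := by
      refine Finset.sum_le_sum fun p hp => ?_
      rw [HasAntidiagonal.mem_antidiagonal] at hp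
      have := fac_mul 3 (p.1 + 1 + 2) (p.2 + 1 + 2) (by omega) (by omega)
      have e : p.1 + 1 + 2 + (p.2 + 1 + 2) - 3 = f + 3 := by omega
      rw [e] at this
      exact this
    rw [Finset.sum_const, Finset.Nat.card_antidiagonal, smul_eq_mul] at h
    have e : (f + 1 + 1 + 2).factorial = (f + 4) * (f + 3).factorial := Nat.factorial_succ (f + 3)
    simp only [zero_add, Nat.factorial_two] at *
    rw [e]
    nlinarith [Nat.factorial_pos (f + 3)]

noncomputable def conv (u v : ℕ → ℝ) (e : ℕ) : ℝ := ∑ p ∈ antidiagonal e, u p.1 * v p.2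

theorem conv_split (u v : ℕ → ℝ) (f : ℕ) : conv u v (f + 2) = u 0 * v (f + 2) + u (f + 2) * v 0 +
    ∑ p ∈ antidiagonal f, u (p.1 + 1) * v (p.2 + 1) := by
  unfold conv
  rw [Finset.Nat.sum_antidiagonal_succ, Finset.Nat.sum_antidiagonal_succ']
  ring

theorem conv_mid (u v : ℕ → ℝ) (A B : ℝ) (hA : 0 ≤ A)
    (hu : ∀ e, |u e| ≤ A * (e + 1).factorial) (hv : ∀ e, |v e| ≤ B * (e + 1).factorial) (f : ℕ) :
    |∑ p ∈ antidiagonal f, u (p.1 + 1) * v (p.2 + 1)| ≤ A * B * (10 * (f + 2).factorial) := by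
  have hB : 0 ≤ B := by simpa using (abs_nonneg _).trans (hv 0)
  calc _ ≤ ∑ p ∈ antidiagonal f, |u (p.1 + 1) * v (p.2 + 1)| := Finset.abs_sum_le_sum_abs _ _
    _ ≤ ∑ p ∈ antidiagonal f, A * B * (((p.1 + 2).factorial * (p.2 + 2).factorial : ℕ) : ℝ) := by
        refine Finset.sum_le_sum fun p hp => ?_
        rw [abs_mul]
        calc _ ≤ (A * (p.1 + 1 + 1).factorial) * (B * (p.2 + 1 + 1).factorial) :=
              mul_le_mul (hu _) (hv _) (abs_nonneg _) (by positivity)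
          _ = _ := by push_cast; ring
    _ = A * B * ((∑ p ∈ antidiagonal f, (p.1 + 2).factorial * (p.2 + 2).factorial : ℕ) : ℝ) := by
        rw [← Finset.mul_sum]; push_cast; rfl
    _ ≤ _ := by
        refine mul_le_mul_of_nonneg_left ?_ (by positivity)
        exact_mod_cast mid_bound f

theorem conv_bound (u v : ℕ → ℝ) (A B : ℝ) (hA : 0 ≤ A)
    (hu : ∀ e, |u e| ≤ A * (e + 1).factorial) (hv : ∀ e, |v e| ≤ B * (e + 1).factorial) (e : ℕ) :
    |conv u v e| ≤ 12 * A * B * (e + 1).factorial := by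
  have hB : 0 ≤ B := by simpa using (abs_nonneg _).trans (hv 0)
  have hAB : 0 ≤ A * B := mul_nonneg hA hB
  have key : ∀ a b, |u a * v b| ≤ A * B * ((a + 1).factorial * (b + 1).factorial) := by
    intro a b
    rw [abs_mul]
    calc _ ≤ (A * (a + 1).factorial) * (B * (b + 1).factorial) :=
              mul_le_mul (hu _) (hv _) (abs_nonneg _) (by positivity)
      _ = _ := by ring
  rcases e with _ | _ | f
  · have := key 0 0
    simp [conv] at this ⊢
    nlinarith
  · have h1 := key 0 1
    have h2 := key 1 0
    have h3 := abs_add_le (u 0 * v 1) (u 1 * v 0)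
    simp [conv, Finset.Nat.sum_antidiagonal_succ, Nat.factorial] at h1 h2 h3 ⊢
    nlinarith
  · rw [conv_split]
    have h1 := key 0 (f + 2)
    have h2 := key (f + 2) 0
    have h3 := conv_mid u v A B hA hu hv f
    have h4 : ((f + 2).factorial : ℝ) ≤ (f + 1 + 1 + 1).factorial := by
      exact_mod_cast Nat.factorial_le (by omega)
    have h5 := mul_le_mul_of_nonneg_left h4 hAB
    refine (abs_add_le _ _).trans ?_
    refine (add_le_add_left (abs_add_le _ _) _).trans ?_
    simp only [zero_add, Nat.factorial_one, Nat.cast_one, one_mul, mul_one] at *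
    linarith

theorem conv_tendsto (u v : ℕ → ℝ) (A B α β : ℝ) (hA : 0 ≤ A)
    (hu : ∀ e, |u e| ≤ A * (e + 1).factorial) (hv : ∀ e, |v e| ≤ B * (e + 1).factorial)
    (hu' : Tendsto (fun e => u e / (e + 1).factorial) atTop (nhds α))
    (hv' : Tendsto (fun e => v e / (e + 1).factorial) atTop (nhds β)) :
    Tendsto (fun e => conv u v e / (e + 1).factorial) atTop (nhds (u 0 * β + α * v 0)) := by
  rw [← tendsto_add_atTop_iff_nat 2] at hu' hv' ⊢
  have hm : Tendsto (fun f : ℕ => (∑ p ∈ antidiagonal f, u (p.1 + 1) * v (p.2 + 1)) /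
      ((f + 2 + 1).factorial : ℝ)) atTop (nhds 0) := by
    have h0 : Tendsto (fun f : ℕ => A * B * 10 * (1 / ((f : ℝ) + 1))) atTop (nhds 0) := by
      simpa using tendsto_one_div_add_atTop_nhds_zero_nat.const_mul (A * B * 10)
    refine squeeze_zero_norm (fun f => ?_) h0
    have hB : 0 ≤ B := by simpa using (abs_nonneg _).trans (hv 0)
    rw [Real.norm_eq_abs, abs_div, Nat.abs_cast, div_le_iff₀ (by positivity)]
    refine (conv_mid u v A B hA hu hv f).trans ?_
    rw [Nat.factorial_succ (f + 2)]
    push_cast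
    have : A * B * 10 * (1 / ((f : ℝ) + 1)) * (((f : ℝ) + 2 + 1) * (f + 2).factorial) =
      A * B * (10 * (f + 2).factorial) * ((f + 3) / (f + 1)) := by field_simp; ring
    rw [this]
    refine le_mul_of_one_le_right (by positivity) ?_
    rw [le_div_iff₀ (by positivity)]
    linarith
  have := ((hv'.const_mul (u 0)).add (hu'.mul_const (v 0))).add hm
  rw [add_zero] at this
  refine this.congr fun f => ?_
  rw [conv_split]
  ring

open PowerSeries in
theorem Q_props (l : ℝ) (hl : 0 < l) (Q : PowerSeries ℝ) (h0 : coeff 0 Q = l)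
    (h1 : ∀ e, coeff (e + 1) Q = (e + 2).factorial) (i : ℕ) :
    coeff 0 (Q ^ i) = l ^ i ∧
    (∀ e, |coeff e (Q ^ i)| ≤ (12 * (1 + l)) ^ i * (e + 1).factorial) ∧
    Tendsto (fun e => coeff e (Q ^ i) / ((e + 1).factorial : ℝ)) atTop (nhds (i * l ^ (i - 1))) := by
  have hQb : ∀ e, |coeff e Q| ≤ (1 + l) * (e + 1).factorial := by
    intro e
    rcases e with _ | e
    · rw [h0, abs_of_pos hl]; simp
    · rw [h1, Nat.abs_cast]
      exact le_mul_of_one_le_left (by positivity) (by linarith)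
  have hQt : Tendsto (fun e => coeff e Q / ((e + 1).factorial : ℝ)) atTop (nhds 1) := by
    rw [← tendsto_add_atTop_iff_nat 1]
    refine tendsto_const_nhds.congr fun e => ?_
    rw [h1, div_self (by positivity)]
  induction i with
  | zero =>
    refine ⟨by simp, fun e => ?_, ?_⟩
    · rw [pow_zero, pow_zero, coeff_one]
      split_ifs
      · subst e; simp
      · simp
    · rw [← tendsto_add_atTop_iff_nat 1]
      refine tendsto_const_nhds.congr fun e => ?_
      simp [coeff_one]
  | succ i ih =>
    obtain ⟨i1, i2, i3⟩ := ih
    have hc : ∀ e, coeff e (Q ^ (i + 1)) =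
        conv (fun e => coeff e Q) (fun e => coeff e (Q ^ i)) e := by
      intro e
      rw [pow_succ', coeff_mul]; rfl
    refine ⟨?_, fun e => ?_, ?_⟩
    · rw [hc]; rw [conv, Finset.Nat.antidiagonal_zero, sum_singleton, h0, i1]; ring
    · rw [hc]
      refine (conv_bound _ _ _ _ (by positivity) hQb i2 e).trans (le_of_eq ?_)
      ring
    · have := conv_tendsto _ _ _ _ _ _ (by positivity) hQb i2 hQt i3
      simp only [hc]
      convert this using 2
      rw [h0, i1]
      rcases i with _ | i
      · simp
      · simp; ring

open PowerSeries in
theorem coeff_Phi (Q : PowerSeries ℝ) (n j : ℕ) :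
    coeff j ((1 + X * Q) ^ n) =
      ∑ i ∈ range (j + 1), (n.choose i : ℝ) * coeff (j - i) (Q ^ i) := by
  have hA : ∀ i, coeff j ((X * Q) ^ i * 1 ^ (n - i) * ((n.choose i : ℕ) : PowerSeries ℝ)) =
      if i ≤ j then (n.choose i : ℝ) * coeff (j - i) (Q ^ i) else 0 := by
    intro i
    have : (X * Q) ^ i * 1 ^ (n - i) * ((n.choose i : ℕ) : PowerSeries ℝ) =
      C (n.choose i : ℝ) * (X ^ i * Q ^ i) := by
      rw [map_natCast]; ring
    rw [this, coeff_C_mul, coeff_X_pow_mul']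
    split_ifs <;> simp
  rw [add_comm, add_pow, map_sum]
  simp only [hA]
  have h1 : ∑ i ∈ range (n + 1), (if i ≤ j then (n.choose i : ℝ) * coeff (j - i) (Q ^ i) else 0) =
    ∑ i ∈ range (n + j + 1), (if i ≤ j then (n.choose i : ℝ) * coeff (j - i) (Q ^ i) else 0) := by
    apply Finset.sum_subset
    · intro i; simp; omega
    · intro i _ hi
      rw [Nat.choose_eq_zero_of_lt (by simp at hi; omega)]; simp
  rw [h1, ← Finset.sum_filter]
  apply Finset.sum_congr _ fun _ _ => rfl
  ext i; simp; omega

open PowerSeries in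
theorem Z_tendsto (l : ℝ) (hl : 0 < l) (Q : PowerSeries ℝ) (h0 : coeff 0 Q = l)
    (h1 : ∀ e, coeff (e + 1) Q = (e + 2).factorial) :
    Tendsto (fun m : ℕ => coeff m ((1 + X * Q) ^ (m + 1)) / ((m + 1).factorial : ℝ)) atTop
      (nhds (Real.exp l)) := by
  have hQ := Q_props l hl Q h0 h1
  let f : ℕ → ℕ → ℝ := fun m i => if i ≤ m then
    coeff (m - i) (Q ^ i) / ((m - i + 1).factorial : ℝ) / (i.factorial : ℝ) else 0
  have hf : ∀ m : ℕ, coeff m ((1 + X * Q) ^ (m + 1)) / ((m + 1).factorial : ℝ) = ∑' i, f m i := by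
    intro m
    rw [tsum_eq_sum (s := range (m + 1)) (by intro i hi; simp at hi; simp [f]; omega),
      coeff_Phi, Finset.sum_div]
    refine Finset.sum_congr rfl fun i hi => ?_
    have hi' : i ≤ m := by simp at hi; omega
    simp only [f, if_pos hi']
    rw [Nat.cast_choose ℝ (show i ≤ m + 1 by omega), show m + 1 - i = m - i + 1 by omega]
    field_simp
  simp only [hf]
  have hg : ∑' i : ℕ, ((i : ℝ) * l ^ (i - 1)) / (i.factorial : ℝ) = Real.exp l := by
    have hs : HasSum (fun i : ℕ => l ^ i / (i.factorial : ℝ)) (Real.exp l) := by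
      rw [Real.exp_eq_exp_ℝ]; exact NormedSpace.expSeries_div_hasSum_exp l
    have : HasSum (fun i : ℕ => ((i : ℝ) * l ^ (i - 1)) / (i.factorial : ℝ)) (Real.exp l) := by
      rw [← hasSum_nat_add_iff' 1]
      simp only [range_one, sum_singleton, Nat.cast_zero, zero_mul, zero_div, sub_zero]
      refine (congrArg (fun g => HasSum g (Real.exp l)) (funext fun i => ?_)).mpr hs
      rw [Nat.factorial_succ]
      push_cast
      field_simp
    exact this.tsum_eq
  rw [← hg]
  refine tendsto_tsum_of_dominated_convergence (bound := fun i => (12 * (1 + l)) ^ i / (i.factorial : ℝ))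
    (Real.summable_pow_div_factorial _) (fun i => ?_) (Eventually.of_forall fun m i => ?_)
  · rw [← tendsto_add_atTop_iff_nat i]
    refine ((hQ i).2.2.div_const _).congr fun e => ?_
    simp [f]
  · simp only [f]
    split_ifs
    · rw [Real.norm_eq_abs, abs_div, abs_div, Nat.abs_cast, Nat.abs_cast]
      gcongr
      rw [div_le_iff₀ (by positivity)]
      exact (hQ i).2.1 _
    · rw [norm_zero]; positivity

theorem choose_tendsto (i : ℕ) :
    Tendsto (fun n : ℕ => (n.choose i : ℝ) / (n : ℝ) ^ i) atTop (nhds (1 / i.factorial)) := by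
  have h := (isEquivalent_choose i)
  have := (Asymptotics.isEquivalent_iff_tendsto_one (by
    filter_upwards [eventually_gt_atTop 0] with n hn
    positivity)).1 h
  have := this.mul_const (1 / (i.factorial : ℝ))
  rw [one_mul] at this
  refine this.congr fun n => ?_
  simp only [Pi.div_apply]
  have : (i.factorial : ℝ) ≠ 0 := by positivity
  field_simp

theorem R_tendsto (j : ℕ) :
    Tendsto (fun n : ℕ => (n : ℝ) ^ j * ((n - j).factorial : ℝ) / (n.factorial : ℝ)) atTop (nhds 1) := by
  have := (choose_tendsto j).inv₀ (by positivity)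
  have := this.mul_const (1 / (j.factorial : ℝ))
  rw [inv_mul_cancel₀ (by positivity)] at this
  refine this.congr' ?_
  filter_upwards [eventually_gt_atTop j] with n hn
  have : (n : ℝ) ≠ 0 := by have : n ≠ 0 := by omega
                           exact_mod_cast this
  rw [Nat.cast_choose ℝ hn.le]
  field_simp

theorem ratio_tendsto (j : ℕ) :
    Tendsto (fun n : ℕ => ((n - j : ℕ) : ℝ) / (n : ℝ)) atTop (nhds 1) := by
  have : Tendsto (fun n : ℕ => 1 - (j : ℝ) / n) atTop (nhds (1 - 0)) :=
    tendsto_const_nhds.sub (tendsto_const_div_atTop_nhds_zero_nat _)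
  rw [sub_zero] at this
  refine this.congr' ?_
  filter_upwards [eventually_gt_atTop j] with n hn
  have : (n : ℝ) ≠ 0 := by have : n ≠ 0 := by omega
                           exact_mod_cast this
  rw [Nat.cast_sub hn.le]
  field_simp

theorem choose_tendsto' (j : ℕ) :
    Tendsto (fun n : ℕ => ((n - j).choose j : ℝ) / (n : ℝ) ^ j) atTop (nhds (1 / j.factorial)) := by
  have := ((choose_tendsto j).comp (tendsto_sub_atTop_nat j)).mul ((ratio_tendsto j).pow j)
  rw [one_pow, mul_one] at this
  refine this.congr' ?_
  filter_upwards [eventually_gt_atTop j] with n hn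
  have : ((n - j : ℕ) : ℝ) ≠ 0 := by have : n - j ≠ 0 := by omega
                                     exact_mod_cast this
  simp only [Function.comp]
  rw [div_pow]
  field_simp

open PowerSeries in
theorem coeff_tendsto (Q : PowerSeries ℝ) (j : ℕ) :
    Tendsto (fun n : ℕ => coeff j ((1 + X * Q) ^ n) / (n : ℝ) ^ j) atTop
      (nhds (coeff 0 (Q ^ j) / j.factorial)) := by
  simp only [coeff_Phi, Finset.sum_range_succ _ j, add_div, Finset.sum_div, Nat.sub_self]
  rw [← zero_add (coeff 0 (Q ^ j) / (j.factorial : ℝ))]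
  refine Tendsto.add ?_ ?_
  · rw [← Finset.sum_const_zero (s := range j)]
    refine tendsto_finsetSum _ fun i hi => ?_
    have hi' : i < j := by simpa using hi
    have h1 : Tendsto (fun n : ℕ => ((n : ℝ) ^ (j - i))⁻¹) atTop (nhds 0) := by
      apply Tendsto.inv_tendsto_atTop
      exact (tendsto_pow_atTop (by omega)).comp tendsto_natCast_atTop_atTop
    have := ((choose_tendsto i).mul h1).mul_const (coeff (j - i) (Q ^ i))
    rw [mul_zero, zero_mul] at this
    refine this.congr fun n => ?_
    have e : (n : ℝ) ^ j = n ^ i * n ^ (j - i) := by rw [← pow_add]; congr 1; omega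
    rw [e, div_mul_eq_mul_div, div_eq_mul_inv, div_eq_mul_inv, mul_inv]
    ring
  · have := (choose_tendsto j).mul_const (coeff 0 (Q ^ j))
    rw [one_div_mul_eq_div] at this
    refine this.congr fun n => ?_
    ring

end analysis

/-- Theorem 2: with `w_2 = λ` and `w_n = (n−1)!` otherwise, for each fixed `j`,
`C(N−j−1,j)·λ^j·(N−j−1)!/Z_N → e^{−λ}λ^j/j!`, and consequently
`N − σ(s) →d Poisson(λ)` (here `σ(s) = #children(s) + 1`). -/
theorem stmt_6 (l : ℝ) (hl : 0 < l) :
    (∀ j : ℕ, Tendsto (fun N : ℕ =>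
        ((N - j - 1).choose j : ℝ) * l ^ j * ((N - j - 1).factorial : ℝ) /
          Zfun (fun n => if n = 2 then l else ((n - 1).factorial : ℝ)) N)
      atTop (nhds (Real.exp (-l) * l ^ j / j.factorial))) ∧
    (∀ j : ℕ, Tendsto (fun N : ℕ =>
        nu (fun n => if n = 2 then l else ((n - 1).factorial : ℝ)) N
          (fun t => N - (t.children.length + 1) = j))
      atTop (nhds (Real.exp (-l) * l ^ j / j.factorial))) := by
  set w : ℕ → ℝ := fun n => if n = 2 then l else ((n - 1).factorial : ℝ) with hw
  let Q : PowerSeries ℝ := PowerSeries.mk fun e => w (e + 2)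
  have h0 : PowerSeries.coeff 0 Q = l := by simp [Q, hw]
  have h1 : ∀ e, PowerSeries.coeff (e + 1) Q = ((e + 2).factorial : ℝ) := by
    intro e; simp [Q, hw]
  have hΦ : ∀ i, PowerSeries.coeff i (1 + PowerSeries.X * Q) = w (i + 1) := by
    intro i
    rcases i with _ | i
    · simp [hw]
    · rw [map_add, PowerSeries.coeff_succ_X_mul, PowerSeries.coeff_one]
      simp [Q]
  have hlag := lagrange w _ hΦ
  have hZ : Tendsto (fun n : ℕ => Zfun w (n + 1) / (n.factorial : ℝ)) atTop (nhds (Real.exp l)) := by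
    refine (Z_tendsto l hl Q h0 h1).congr fun n => ?_
    have := hlag n 1 n (by omega)
    rw [Nat.cast_one, one_mul] at this
    rw [← this, Zfun_eq, Nat.factorial_succ]
    push_cast
    field_simp
  constructor
  · intro j
    rw [← tendsto_add_atTop_iff_nat 1]
    have := (((choose_tendsto' j).mul_const (l ^ j)).mul (R_tendsto j)).div hZ (Real.exp_ne_zero l)
    have e : 1 / (j.factorial : ℝ) * l ^ j * 1 / Real.exp l =
        Real.exp (-l) * l ^ j / j.factorial := by
      rw [Real.exp_neg]; field_simp
    rw [e] at this
    refine this.congr' ?_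
    filter_upwards [eventually_gt_atTop j] with n hn
    have : (n : ℝ) ≠ 0 := by
      have : n ≠ 0 := by omega
      exact_mod_cast this
    have e2 : n + 1 - j - 1 = n - j := by omega
    simp only [Pi.div_apply]
    rw [e2]
    field_simp
  · intro j
    rw [← tendsto_add_atTop_iff_nat 1]
    have := (((coeff_tendsto Q j).mul (R_tendsto j)).mul (ratio_tendsto j)).div hZ
      (Real.exp_ne_zero l)
    have e : PowerSeries.coeff 0 (Q ^ j) / (j.factorial : ℝ) * 1 * 1 / Real.exp l =
        Real.exp (-l) * l ^ j / j.factorial := by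
      rw [Real.exp_neg, (Q_props l hl Q h0 h1 j).1]; field_simp
    rw [e] at this
    refine this.congr' ?_
    filter_upwards [eventually_gt_atTop (j + 1)] with n hn
    rw [nu_eq w n j (by omega)]
    obtain ⟨m, rfl⟩ : ∃ m, n = m + 1 := ⟨n - 1, by omega⟩
    have h3 := hlag m (m + 1 - j) j (by omega)
    have h4 : w (m + 1 - j + 1) = ((m + 1 - j).factorial : ℝ) := by
      simp only [hw]
      rw [if_neg (by omega), Nat.add_sub_cancel]
    have h5 : SS w (m + 1) (m + 1 - j) = ((m + 1 - j : ℕ) : ℝ) *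
        PowerSeries.coeff j ((1 + PowerSeries.X * Q) ^ (m + 1)) / ((m : ℝ) + 1) := by
      rw [← h3]; field_simp
    rw [h4, h5]
    simp only [Pi.div_apply]
    push_cast
    field_simp
end

section
/- With weights w_n = ((n−1)!)^α for fixed 0 < α < 1, the partition function satisfies log Z_N = α·log((N−1)!) + O(N^{1−α}) as N → ∞; equivalently log Z_N = αN log N − αN + O(N^{1−α}). -/
open Filter

lemma fact_ratio (k : ℕ) :
    ((k + 1).factorial : ℝ) ≤ (2 / 3 : ℝ) ^ k * ((k : ℝ) + 2) ^ k := by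
  induction k with
  | zero => simp
  | succ k ih =>
    have hb : (3 / 2 : ℝ) * ((k : ℝ) + 2) ^ (k + 1) ≤ ((k : ℝ) + 3) ^ (k + 1) := by
      have h := one_add_mul_le_pow (a := 1 / ((k : ℝ) + 2))
        (by have : (0 : ℝ) ≤ 1 / ((k : ℝ) + 2) := by positivity
            linarith) (k + 1)
      have h2 : (3 / 2 : ℝ) ≤ 1 + ((k + 1 : ℕ) : ℝ) * (1 / ((k : ℝ) + 2)) := by
        push_cast
        have : (1 / 2 : ℝ) ≤ ((k : ℝ) + 1) * (1 / ((k : ℝ) + 2)) := by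
          rw [mul_one_div, div_le_div_iff₀ (by norm_num) (by positivity)]
          have : (0 : ℝ) ≤ k := by positivity
          linarith
        linarith
      have h3 : ((k : ℝ) + 3) = (1 + 1 / ((k : ℝ) + 2)) * ((k : ℝ) + 2) := by
        field_simp; ring
      rw [h3, mul_pow]
      exact mul_le_mul_of_nonneg_right (h2.trans h) (by positivity)
    rw [Nat.factorial_succ]
    push_cast
    calc ((k : ℝ) + 1 + 1) * ((k + 1).factorial : ℝ)
        ≤ ((k : ℝ) + 1 + 1) * ((2 / 3 : ℝ) ^ k * ((k : ℝ) + 2) ^ k) := by gcongr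
      _ = (2 / 3 : ℝ) ^ (k + 1) * ((3 / 2 : ℝ) * ((k : ℝ) + 2) ^ (k + 1)) := by ring
      _ ≤ (2 / 3 : ℝ) ^ (k + 1) * ((k : ℝ) + 3) ^ (k + 1) := by gcongr
      _ = _ := by ring

lemma exists_y (n m : ℕ) (hn : 1 ≤ n) (hm : m ≤ n) :
    ∃ y : ℝ, 0 < y ∧ y * ((m : ℝ) + 1) ≤ 1 ∧ y ≤ Real.exp 1 / n ∧
      (m.factorial : ℝ) ≤ n.factorial * y ^ (n - m) := by
  have hn' : (0 : ℝ) < n := by exact_mod_cast hn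
  have hg : (0 : ℝ) < n / Real.exp 1 := by positivity
  have key : ∀ G : ℝ, 0 < G → (m.factorial : ℝ) * G ^ (n - m) ≤ n.factorial →
      (m.factorial : ℝ) ≤ n.factorial * G⁻¹ ^ (n - m) := by
    intro G hG h
    rw [inv_pow, ← div_eq_mul_inv, le_div_iff₀ (by positivity)]
    exact h
  rcases le_total (n / Real.exp 1) ((m : ℝ) + 1) with h | h
  · refine ⟨((m : ℝ) + 1)⁻¹, by positivity, by field_simp; rfl, ?_, ?_⟩
    · rw [inv_le_comm₀ (by positivity) (by positivity), inv_div]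
      exact h
    · apply key _ (by positivity)
      have := Nat.factorial_mul_pow_le_factorial (m := m) (n := n - m)
      rw [Nat.add_sub_cancel' hm] at this
      exact_mod_cast this
  · refine ⟨(n / Real.exp 1)⁻¹, by positivity, ?_, by rw [inv_div], ?_⟩
    · rw [inv_mul_le_iff₀ hg]; simpa using h
    · apply key _ hg
      have h1 : (m.factorial : ℝ) ≤ (n / Real.exp 1) ^ m := by
        calc (m.factorial : ℝ) ≤ (m : ℝ) ^ m := by exact_mod_cast Nat.factorial_le_pow m
          _ ≤ _ := by gcongr; linarith
      calc (m.factorial : ℝ) * (n / Real.exp 1) ^ (n - m)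
          ≤ (n / Real.exp 1) ^ m * (n / Real.exp 1) ^ (n - m) := by gcongr
        _ = (n / Real.exp 1) ^ n := by rw [← pow_add, Nat.add_sub_cancel' hm]
        _ ≤ n.factorial := by
          have := Real.pow_div_factorial_le_exp (n : ℝ) hn'.le n
          rw [div_pow, ← Real.exp_nat_mul, mul_one, div_le_iff₀ (by positivity)]
          rw [div_le_iff₀ (by positivity)] at this
          linarith

lemma sum_bound (α : ℝ) (h0 : 0 < α) (m : ℕ) (y : ℝ) (hy : 0 < y)
    (hym : y * ((m : ℝ) + 1) ≤ 1) :
    ∑ d ∈ Finset.range (m + 1), (d.factorial : ℝ) ^ α * (y ^ α) ^ d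
      ≤ 1 + (1 - (2 / 3 : ℝ) ^ α)⁻¹ * y ^ α := by
  have hr0 : (0 : ℝ) ≤ (2 / 3 : ℝ) ^ α := by positivity
  have hr1 : (2 / 3 : ℝ) ^ α < 1 := Real.rpow_lt_one (by norm_num) (by norm_num) h0
  rw [Finset.sum_range_succ']
  have hk : ∀ k ∈ Finset.range m,
      ((k + 1).factorial : ℝ) ^ α * (y ^ α) ^ (k + 1) ≤ ((2 / 3 : ℝ) ^ α) ^ k * y ^ α := by
    intro k hk
    have hkm : ((k : ℝ) + 2) ≤ (m : ℝ) + 1 := by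
      have : (k + 1 : ℕ) ≤ m := Finset.mem_range.1 hk
      have : ((k + 1 : ℕ) : ℝ) ≤ m := by exact_mod_cast this
      push_cast at this; linarith
    have e : ∀ x : ℝ, 0 ≤ x → ∀ j : ℕ, (x ^ α) ^ j = (x ^ j) ^ α := by
      intro x hx j
      rw [← Real.rpow_natCast, ← Real.rpow_natCast, ← Real.rpow_mul hx, ← Real.rpow_mul hx, mul_comm]
    rw [e y hy.le, e _ (by norm_num), ← Real.mul_rpow (by positivity) (by positivity),
      ← Real.mul_rpow (by positivity) (by positivity)]
    apply Real.rpow_le_rpow (by positivity) _ h0.le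
    calc ((k + 1).factorial : ℝ) * y ^ (k + 1)
        ≤ ((2 / 3 : ℝ) ^ k * ((k : ℝ) + 2) ^ k) * y ^ (k + 1) := by
          gcongr; exact fact_ratio k
      _ = (2 / 3 : ℝ) ^ k * y * (y * ((k : ℝ) + 2)) ^ k := by rw [mul_pow]; ring
      _ ≤ (2 / 3 : ℝ) ^ k * y * 1 := by
          gcongr
          apply pow_le_one₀ (by positivity)
          exact le_trans (by gcongr) hym
      _ = _ := by ring
  have h2 := Finset.sum_le_sum hk
  rw [← Finset.sum_mul] at h2
  have h3 : ∑ k ∈ Finset.range m, ((2 / 3 : ℝ) ^ α) ^ k ≤ (1 - (2 / 3 : ℝ) ^ α)⁻¹ := by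
    rw [← tsum_geometric_of_lt_one hr0 hr1]
    exact (summable_geometric_of_lt_one hr0 hr1).sum_le_tsum _ (fun _ _ => by positivity)
  have h4 := mul_le_mul_of_nonneg_right h3 (by positivity : (0 : ℝ) ≤ y ^ α)
  simp only [Nat.factorial_zero, Nat.cast_one, Real.one_rpow, pow_zero, mul_one]
  linarith

lemma inner_bound (α : ℝ) (h0 : 0 < α) (N n m : ℕ) (hn : 1 ≤ n) (hm : m ≤ n) (i : Fin N) :
    ∑ d ∈ (Finset.Nat.antidiagonalTuple N n).filter (fun d => d i = m ∧ ∀ j, d j ≤ m),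
        ∏ j, ((d j).factorial : ℝ) ^ α
      ≤ (n.factorial : ℝ) ^ α *
        (1 + (1 - (2 / 3 : ℝ) ^ α)⁻¹ * (Real.exp 1 / n) ^ α) ^ N := by
  obtain ⟨y, hy, hym, hyn, hf⟩ := exists_y n m hn hm
  have hr1 : (2 / 3 : ℝ) ^ α < 1 := Real.rpow_lt_one (by norm_num) (by norm_num) h0
  have hS : 0 < (1 - (2 / 3 : ℝ) ^ α)⁻¹ := inv_pos.2 (by linarith)
  set W := 1 + (1 - (2 / 3 : ℝ) ^ α)⁻¹ * (Real.exp 1 / n) ^ α with hW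
  have hW1 : 1 ≤ W := by
    have : 0 ≤ (1 - (2 / 3 : ℝ) ^ α)⁻¹ * (Real.exp 1 / n) ^ α := by positivity
    linarith
  have hfa0 : (0 : ℝ) ≤ (n.factorial : ℝ) ^ α := by positivity
  let F : Fin N → ℕ → ℝ := fun j e => if j = i then 1 else (e.factorial : ℝ) ^ α * (y ^ α) ^ e
  have hF : ∀ j e, 0 ≤ F j e := by
    intro j e; simp only [F]; split_ifs <;> positivity
  let T : Fin N → Finset ℕ := fun j => if j = i then {m} else Finset.range (m + 1)
  have hpt : ∀ d ∈ (Finset.Nat.antidiagonalTuple N n).filter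
      (fun d => d i = m ∧ ∀ j, d j ≤ m),
      ∏ j, ((d j).factorial : ℝ) ^ α ≤ (n.factorial : ℝ) ^ α * ∏ j, F j (d j) := by
    intro d hd
    rw [Finset.mem_filter, Finset.Nat.mem_antidiagonalTuple] at hd
    obtain ⟨hs, hi, -⟩ := hd
    rw [← Finset.mul_prod_erase Finset.univ _ (Finset.mem_univ i),
      ← Finset.mul_prod_erase Finset.univ (fun j => F j (d j)) (Finset.mem_univ i)]
    have e1 : ∏ j ∈ Finset.univ.erase i, F j (d j)
        = (∏ j ∈ Finset.univ.erase i, ((d j).factorial : ℝ) ^ α) * (y ^ α) ^ (n - m) := by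
      have : ∑ j ∈ Finset.univ.erase i, d j = n - m := by
        have := Finset.add_sum_erase Finset.univ d (Finset.mem_univ i)
        omega
      rw [← this, ← Finset.prod_pow_eq_pow_sum, ← Finset.prod_mul_distrib]
      apply Finset.prod_congr rfl
      intro j hj
      simp [F, Finset.ne_of_mem_erase hj]
    rw [e1, hi]
    have e2 : (m.factorial : ℝ) ^ α ≤ (n.factorial : ℝ) ^ α * (y ^ α) ^ (n - m) := by
      have : (y ^ α) ^ (n - m) = (y ^ (n - m)) ^ α := by
        rw [← Real.rpow_natCast, ← Real.rpow_natCast, ← Real.rpow_mul hy.le,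
          ← Real.rpow_mul hy.le, mul_comm]
      rw [this, ← Real.mul_rpow (by positivity) (by positivity)]
      exact Real.rpow_le_rpow (by positivity) hf h0.le
    have e3 : F i m = 1 := by simp [F]
    have hp : 0 ≤ ∏ j ∈ Finset.univ.erase i, ((d j).factorial : ℝ) ^ α :=
      Finset.prod_nonneg fun _ _ => by positivity
    have := mul_le_mul_of_nonneg_right e2 hp
    rw [e3]
    linarith
  calc _ ≤ ∑ d ∈ (Finset.Nat.antidiagonalTuple N n).filter
          (fun d => d i = m ∧ ∀ j, d j ≤ m), (n.factorial : ℝ) ^ α * ∏ j, F j (d j) :=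
        Finset.sum_le_sum hpt
    _ ≤ ∑ d ∈ Fintype.piFinset T, (n.factorial : ℝ) ^ α * ∏ j, F j (d j) := by
        apply Finset.sum_le_sum_of_subset_of_nonneg
        · intro d hd
          rw [Finset.mem_filter] at hd
          rw [Fintype.mem_piFinset]
          intro j
          by_cases h : j = i
          · subst h; simp [T, hd.2.1]
          · simp only [T, h, if_false, Finset.mem_range]
            have := hd.2.2 j
            omega
        · intro d _ _
          exact mul_nonneg (by positivity) (Finset.prod_nonneg fun j _ => hF j _)
    _ = (n.factorial : ℝ) ^ α * ∏ j, ∑ e ∈ T j, F j e := by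
        rw [← Finset.mul_sum, Finset.prod_univ_sum]
    _ ≤ (n.factorial : ℝ) ^ α * ∏ j : Fin N, W := by
        refine mul_le_mul_of_nonneg_left (Finset.prod_le_prod ?_ ?_) hfa0
        · intro j _
          exact Finset.sum_nonneg fun e _ => hF j e
        · intro j _
          by_cases h : j = i
          · simp [T, F, h, hW1]
          · simp only [T, F, h, if_false]
            refine (sum_bound α h0 m y hy hym).trans ?_
            rw [hW]
            gcongr
    _ = _ := by simp

lemma Z_upper (α : ℝ) (h0 : 0 < α) (n : ℕ) (hn : 1 ≤ n) :
    Z (fun n => ((n - 1).factorial : ℝ) ^ α) (n + 1) n ≤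
      ((n : ℝ) + 1) * (((n : ℝ) + 1) * ((n.factorial : ℝ) ^ α *
        (1 + (1 - (2 / 3 : ℝ) ^ α)⁻¹ * (Real.exp 1 / n) ^ α) ^ (n + 1))) := by
  unfold Z
  simp only [Nat.add_sub_cancel]
  calc _ ≤ ∑ d ∈ Finset.Nat.antidiagonalTuple (n + 1) n, ∑ i : Fin (n + 1),
        ∑ m ∈ Finset.range (n + 1), if d i = m ∧ ∀ j, d j ≤ m then
          ∏ j, ((d j).factorial : ℝ) ^ α else 0 := by
        apply Finset.sum_le_sum
        intro d hd
        rw [Finset.Nat.mem_antidiagonalTuple] at hd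
        obtain ⟨i, -, hi⟩ := Finset.exists_max_image Finset.univ d Finset.univ_nonempty
        have hP : 0 ≤ ∏ j, ((d j).factorial : ℝ) ^ α :=
          Finset.prod_nonneg fun _ _ => by positivity
        have hle : d i ≤ n := by
          rw [← hd]; exact Finset.single_le_sum (fun _ _ => Nat.zero_le _) (Finset.mem_univ i)
        have hnn : ∀ (i' : Fin (n + 1)) (m : ℕ), 0 ≤ if d i' = m ∧ ∀ j, d j ≤ m then
          ∏ j, ((d j).factorial : ℝ) ^ α else 0 := by
          intro i' m; split_ifs <;> [exact hP; exact le_rfl]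
        refine le_trans ?_ (Finset.single_le_sum
          (fun i' _ => Finset.sum_nonneg fun m _ => hnn i' m) (Finset.mem_univ i))
        refine le_trans ?_ (Finset.single_le_sum
          (fun m _ => hnn i m) (Finset.mem_range.2 (Nat.lt_succ_of_le hle)))
        rw [if_pos ⟨rfl, fun j => hi j (Finset.mem_univ j)⟩]
    _ = ∑ i : Fin (n + 1), ∑ m ∈ Finset.range (n + 1),
        ∑ d ∈ (Finset.Nat.antidiagonalTuple (n + 1) n).filter
          (fun d => d i = m ∧ ∀ j, d j ≤ m), ∏ j, ((d j).factorial : ℝ) ^ α := by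
        rw [Finset.sum_comm]
        refine Finset.sum_congr rfl fun i _ => ?_
        rw [Finset.sum_comm]
        refine Finset.sum_congr rfl fun m _ => ?_
        rw [Finset.sum_filter]
    _ ≤ ∑ i : Fin (n + 1), ∑ m ∈ Finset.range (n + 1), ((n.factorial : ℝ) ^ α *
        (1 + (1 - (2 / 3 : ℝ) ^ α)⁻¹ * (Real.exp 1 / n) ^ α) ^ (n + 1)) := by
        refine Finset.sum_le_sum fun i _ => Finset.sum_le_sum fun m hm => ?_
        exact inner_bound α h0 (n + 1) n m hn (Nat.lt_succ_iff.1 (Finset.mem_range.1 hm)) i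
    _ = _ := by simp

lemma Z_lower (α : ℝ) (n : ℕ) (hn : 1 ≤ n) :
    ((n : ℝ) + 1) * (n.factorial : ℝ) ^ α ≤
      Z (fun n => ((n - 1).factorial : ℝ) ^ α) (n + 1) n := by
  unfold Z
  simp only [Nat.add_sub_cancel]
  let s : Fin (n + 1) → (Fin (n + 1) → ℕ) := fun i => Pi.single i n
  have hinj : Function.Injective s := by
    intro i j h
    by_contra hij
    have := congrFun h i
    simp [s, Pi.single_apply, hij] at this
    omega
  have hsub : Finset.univ.image s ⊆ Finset.Nat.antidiagonalTuple (n + 1) n := by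
    intro d hd
    obtain ⟨i, -, rfl⟩ := Finset.mem_image.1 hd
    rw [Finset.Nat.mem_antidiagonalTuple]
    simp [s]
  refine le_trans (le_of_eq ?_) (Finset.sum_le_sum_of_subset_of_nonneg hsub
    fun d _ _ => Finset.prod_nonneg fun _ _ => by positivity)
  rw [Finset.sum_image (fun a _ b _ h => hinj h)]
  have : ∀ i, ∏ j, ((s i j).factorial : ℝ) ^ α = (n.factorial : ℝ) ^ α := by
    intro i
    rw [Finset.prod_eq_single i]
    · simp [s]
    · intro j _ hj; simp [s, hj]
    · simp
  simp [this]

/-- Theorem 3, Eq. (7): with `w_n = ((n−1)!)^α`, `0 < α < 1`,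
`log Z_N = α·log((N−1)!) + O(N^{1−α})` as `N → ∞`. -/
theorem stmt_8 (α : ℝ) (h0 : 0 < α) (h1 : α < 1) :
    (fun N : ℕ =>
        Real.log (Z (fun n => ((n - 1).factorial : ℝ) ^ α) N (N - 1) / N)
          - α * Real.log ((N - 1).factorial)) =O[atTop]
      fun N : ℕ => (N : ℝ) ^ (1 - α) := by
  have hr1 : (2 / 3 : ℝ) ^ α < 1 := Real.rpow_lt_one (by norm_num) (by norm_num) h0
  have hS : 0 < (1 - (2 / 3 : ℝ) ^ α)⁻¹ := inv_pos.2 (by linarith)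
  set S := (1 - (2 / 3 : ℝ) ^ α)⁻¹ with hSdef
  apply Asymptotics.IsBigO.of_bound (1 / (1 - α) + S * (2 * Real.exp 1) ^ α)
  filter_upwards [eventually_ge_atTop 2] with N hN
  obtain ⟨n, rfl⟩ : ∃ n, N = n + 1 := ⟨N - 1, by omega⟩
  have hn : 1 ≤ n := by omega
  have hn' : (1 : ℝ) ≤ n := by exact_mod_cast hn
  have hup := Z_upper α h0 n hn
  have hlo := Z_lower α n hn
  rw [← hSdef] at hup
  simp only [Nat.add_sub_cancel]
  set z := Z (fun n => ((n - 1).factorial : ℝ) ^ α) (n + 1) n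
  have hN0 : (0 : ℝ) < (n : ℝ) + 1 := by positivity
  have hfa : (0 : ℝ) < (n.factorial : ℝ) ^ α := by positivity
  push_cast
  have hl1 : (n.factorial : ℝ) ^ α ≤ z / ((n : ℝ) + 1) := by
    rw [le_div_iff₀ hN0]; linarith
  have hu1 : z / ((n : ℝ) + 1) ≤ ((n : ℝ) + 1) * ((n.factorial : ℝ) ^ α *
        (1 + S * (Real.exp 1 / n) ^ α) ^ (n + 1)) := by
    rw [div_le_iff₀ hN0]; linarith
  have hl2 := Real.log_le_log hfa hl1
  have hu2 := Real.log_le_log (hfa.trans_le hl1) hu1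
  have hW : 0 < 1 + S * (Real.exp 1 / n) ^ α := by positivity
  rw [Real.log_rpow (by positivity)] at hl2
  rw [Real.log_mul (by positivity) (by positivity), Real.log_mul (by positivity) (by positivity),
    Real.log_rpow (by positivity), Real.log_pow] at hu2
  have hlogW : Real.log (1 + S * (Real.exp 1 / n) ^ α) ≤ S * (Real.exp 1 / n) ^ α := by
    have := Real.log_le_sub_one_of_pos hW
    linarith
  have hlogN := Real.log_le_rpow_div hN0.le (by linarith : 0 < 1 - α)
  have hcomp : ((n : ℝ) + 1) * (Real.exp 1 / n) ^ α
      ≤ (2 * Real.exp 1) ^ α * ((n : ℝ) + 1) ^ (1 - α) := by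
    have h2 : (Real.exp 1 / n) ≤ (2 * Real.exp 1) / ((n : ℝ) + 1) := by
      rw [div_le_div_iff₀ (by positivity) hN0]
      nlinarith [Real.exp_pos 1]
    calc ((n : ℝ) + 1) * (Real.exp 1 / n) ^ α
        ≤ ((n : ℝ) + 1) * ((2 * Real.exp 1) / ((n : ℝ) + 1)) ^ α := by gcongr
      _ = _ := by
        rw [Real.div_rpow (by positivity) hN0.le, Real.rpow_sub hN0, Real.rpow_one]
        ring
  have hm1 := mul_le_mul_of_nonneg_left hlogW hN0.le
  have hm2 := mul_le_mul_of_nonneg_left hcomp hS.le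
  push_cast at hu2
  have hpos : 0 ≤ ((n : ℝ) + 1) ^ (1 - α) := by positivity
  rw [Real.norm_of_nonneg (by linarith), Real.norm_of_nonneg hpos]
  have : (1 / (1 - α) + S * (2 * Real.exp 1) ^ α) * ((n : ℝ) + 1) ^ (1 - α)
    = ((n : ℝ) + 1) ^ (1 - α) / (1 - α)
      + S * ((2 * Real.exp 1) ^ α * ((n : ℝ) + 1) ^ (1 - α)) := by ring
  rw [this]
  linarith
end

section
/- With weights w_n = ((n−1)!)^α, 0 < α < 1, and K = ⌊1/α⌋, the probability under ν_N that the random tree T_N has some vertex other than s of degree greater than K+1 tends to 0 as N → ∞. -/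
open Filter

open scoped ENNReal Classical in
theorem multLemma {X Y : Type*} (φ : X → Y) (R : X → Prop) [DecidablePred R] (g : Y → ℝ≥0∞) (c : ℕ)
    (h : ∀ y, g y ≠ 0 → ∃ l : List X, (∀ x, R x → φ x = y → x ∈ l) ∧ l.length ≤ c) :
    ∑' x, (if R x then g (φ x) else 0) ≤ c * ∑' y, g y := by
  rw [← ENNReal.tsum_fiberwise _ φ, ← ENNReal.tsum_mul_left]
  refine ENNReal.tsum_le_tsum fun y => ?_
  by_cases hy : g y = 0
  · rw [hy, mul_zero, nonpos_iff_eq_zero, ENNReal.tsum_eq_zero]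
    rintro ⟨x, hx⟩
    have : φ x = y := hx
    simp [this, hy]
  obtain ⟨l, hl, hc⟩ := h y hy
  calc ∑' b : φ ⁻¹' {y}, (if R b.1 then g (φ b.1) else 0)
      ≤ ∑' b : φ ⁻¹' {y}, (if b.1 ∈ l.toFinset then g y else 0) := by
        refine ENNReal.tsum_le_tsum ?_
        rintro ⟨x, hx⟩
        have hx' : φ x = y := hx
        by_cases hR : R x
        · simp [hR, hx', hl x hR hx']
        · simp [hR]
    _ ≤ ∑' x, (if x ∈ l.toFinset then g y else 0) :=
        ENNReal.tsum_comp_le_tsum_of_injective Subtype.val_injective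
          (fun x => if x ∈ l.toFinset then g y else 0)
    _ = ∑ x ∈ l.toFinset, g y := by
        rw [tsum_eq_sum (s := l.toFinset)]
        · exact Finset.sum_congr rfl fun x hx => by simp [hx]
        · intro x hx; simp [hx]
    _ ≤ c * g y := by
        rw [Finset.sum_const, nsmul_eq_mul]
        gcongr
        exact_mod_cast (List.toFinset_card_le l).trans hc

open scoped ENNReal Classical in
theorem sectLemma {X Y : Type*} (φ : X → Y) (P : X → Prop) [DecidablePred P]
    [∀ y, Decidable (∃ x, φ x = y ∧ P x)] (f : Y → ℝ≥0∞) :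
    ∑' y, (if ∃ x, φ x = y ∧ P x then f y else 0) ≤ ∑' x, (if P x then f (φ x) else 0) := by
  rw [← ENNReal.tsum_fiberwise _ φ]
  refine ENNReal.tsum_le_tsum fun y => ?_
  split_ifs with h
  · obtain ⟨x, hx, hP⟩ := h
    have := ENNReal.le_tsum (f := fun b : φ ⁻¹' {y} => if P b.1 then f (φ b.1) else 0) ⟨x, hx⟩
    simpa [hP, hx] using this
  · exact zero_le

namespace PTree

@[simp] theorem children_node (ts : List PTree) : (node ts).children = ts := rfl

def fsize (ts : List PTree) : ℕ := (ts.map size).sum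

theorem size_node (ts : List PTree) : (node ts).size = 1 + fsize ts := by
  rw [size, fsize, List.attach_map_val (f := size)]

theorem weight_node (w : ℕ → ℝ) (ts : List PTree) :
    (node ts).weight w = w (ts.length + 1) * (ts.map (weight w)).prod := by
  rw [weight, List.attach_map_val (f := weight w)]

theorem maxOutdeg_node (ts : List PTree) (B : ℕ) :
    (node ts).maxOutdeg ≤ B ↔ ts.length ≤ B ∧ ∀ c ∈ ts, c.maxOutdeg ≤ B := by
  rw [maxOutdeg, List.attach_map_val (f := maxOutdeg), max_le_iff]
  refine and_congr_right fun h => ?_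
  clear h
  induction ts with
  | nil => simp
  | cons t ts ih => simp only [List.map_cons, List.foldr_cons, max_le_iff, List.forall_mem_cons, ih]

@[simp] theorem fsize_nil : fsize [] = 0 := rfl
@[simp] theorem fsize_cons (t : PTree) (ts) : fsize (t :: ts) = t.size + fsize ts := by simp [fsize]
@[simp] theorem fsize_append (a b : List PTree) : fsize (a ++ b) = fsize a + fsize b := by
  simp [fsize]

def dec : BinaryTree Unit → List PTree
  | .nil => []
  | .node _ a b => node (dec a) :: dec b

theorem forest_aux (P : List PTree → Prop) (h0 : P [])
    (h1 : ∀ cs rest, P cs → P rest → P (node cs :: rest)) : ∀ n ts, fsize ts ≤ n → P ts := by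
  intro n
  induction n with
  | zero =>
    rintro (_ | ⟨⟨cs⟩, ts⟩) h
    · exact h0
    · simp [size_node] at h
  | succ n ih =>
    rintro (_ | ⟨⟨cs⟩, ts⟩) h
    · exact h0
    · simp only [fsize_cons, size_node] at h
      exact h1 _ _ (ih _ (by omega)) (ih _ (by omega))

theorem forest_induction {P : List PTree → Prop} (h0 : P [])
    (h1 : ∀ cs rest, P cs → P rest → P (node cs :: rest)) (ts) : P ts :=
  forest_aux P h0 h1 _ ts le_rfl

theorem dec_surj : Function.Surjective dec := by
  intro ts
  induction ts using forest_induction with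
  | h0 => exact ⟨.nil, rfl⟩
  | h1 cs rest h1 h2 =>
    obtain ⟨a, rfl⟩ := h1
    obtain ⟨b, rfl⟩ := h2
    exact ⟨.node () a b, rfl⟩

theorem fsize_dec (x : BinaryTree Unit) : fsize (dec x) = x.numNodes := by
  induction x with
  | nil => rfl
  | node v a b ha hb => simp [dec, size_node, ha, hb]; omega

abbrev Ctx := List (List PTree × List PTree)

def plug : Ctx → PTree → PTree
  | [], s => s
  | (a, b) :: C, s => node (a ++ plug C s :: b)

abbrev Mk := (List PTree × List PTree) × Ctx × PTree

def glue (m : Mk) : List PTree := m.1.1 ++ plug m.2.1 m.2.2 :: m.1.2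

theorem marks (ts : List PTree) : ∃ l : List Mk, (∀ m, glue m = ts → m ∈ l) ∧
    l.length = fsize ts ∧ (l.map (fun m => m.2.2.children.length)).sum + ts.length = fsize ts := by
  induction ts using forest_induction with
  | h0 => exact ⟨[], by simp [glue], rfl, rfl⟩
  | h1 cs rest h1 h2 =>
    obtain ⟨l1, m1, s1, o1⟩ := h1
    obtain ⟨l2, m2, s2, o2⟩ := h2
    refine ⟨(([], rest), [], node cs) :: (l1.map (fun m => (([], rest), m.1 :: m.2.1, m.2.2)) ++
      l2.map (fun m => ((node cs :: m.1.1, m.1.2), m.2))), ?_, ?_, ?_⟩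
    · rintro ⟨⟨a, b⟩, C, s⟩ h
      rcases a with _ | ⟨x, a⟩
      · simp only [glue, List.nil_append, List.cons.injEq] at h
        obtain ⟨h, rfl⟩ := h
        rcases C with _ | ⟨⟨a', b'⟩, C⟩
        · simp only [plug] at h; subst h; simp
        · simp only [plug, node.injEq] at h
          have := m1 ((a', b'), C, s) h
          refine List.mem_cons_of_mem _ (List.mem_append_left _ ?_)
          exact List.mem_map.2 ⟨_, this, rfl⟩
      · simp only [glue, List.cons_append, List.cons.injEq] at h
        obtain ⟨rfl, h⟩ := h
        have := m2 ((a, b), C, s) h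
        refine List.mem_cons_of_mem _ (List.mem_append_right _ ?_)
        exact List.mem_map.2 ⟨_, this, rfl⟩
    · simp [size_node, s1, s2]; omega
    · simp only [List.map_cons, List.map_append, List.map_map, List.sum_cons, List.sum_append,
        Function.comp_def, fsize_cons, size_node, List.length_cons, children_node]
      omega

theorem exists_mark (B : ℕ) (ts : List PTree) :
    (∃ c ∈ ts, B < c.maxOutdeg) → ∃ m : Mk, glue m = ts ∧ B < m.2.2.children.length := by
  induction ts using forest_induction with
  | h0 => simp
  | h1 cs rest h1 h2 =>
    rintro ⟨c, hc, hB⟩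
    rcases List.mem_cons.1 hc with rfl | hc
    · rw [← not_le, maxOutdeg_node] at hB
      by_cases hl : cs.length ≤ B
      · obtain ⟨⟨⟨a, b⟩, C, s⟩, hm, hb⟩ := h1 (by
          by_contra hcon
          push Not at hcon
          exact hB ⟨hl, hcon⟩)
        exact ⟨(([], rest), (a, b) :: C, s), by simp only [glue, plug] at *; simp [hm], hb⟩
      · exact ⟨(([], rest), [], node cs), by simp [glue, plug], by simpa [children] using hl⟩
    · obtain ⟨⟨⟨a, b⟩, C, s⟩, hm, hb⟩ := h2 ⟨c, hc, hB⟩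
      exact ⟨((node cs :: a, b), C, s), by simp only [glue] at *; simp [hm], hb⟩

theorem big_marks (n B L : ℕ) (hB : n < L * (B + 1)) (t : PTree) (ht : t.size = n + 1) :
    ∃ l : List (Ctx × PTree), (∀ x : Ctx × PTree, B < x.2.children.length → plug x.1 x.2 = t → x ∈ l) ∧
      l.length ≤ L := by
  obtain ⟨l, hm, -, ho⟩ := marks [t]
  refine ⟨(l.filter (fun m => B < m.2.2.children.length)).map (fun m => m.2), ?_, ?_⟩
  · rintro ⟨C, s⟩ hb hp
    refine List.mem_map.2 ⟨(([], []), C, s), ?_, rfl⟩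
    simp only [List.mem_filter]
    refine ⟨hm _ (by simpa [glue] using hp), by simpa using hb⟩
  · have key : ∀ l : List Mk, (l.filter (fun m => B < m.2.2.children.length)).length * (B + 1) ≤
        (l.map (fun m => m.2.2.children.length)).sum := by
      intro l
      induction l with
      | nil => simp
      | cons m l ih =>
        by_cases h : B < m.2.2.children.length
        · simp only [h, decide_true, List.filter_cons_of_pos, List.length_cons, List.map_cons,
            List.sum_cons]
          rw [add_mul]; omega
        · simp only [h, decide_false, List.map_cons, List.sum_cons, List.filter_cons]
          simp only [Bool.false_eq_true, if_false]
          omega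
    have := key l
    simp [ht] at ho
    rw [List.length_map]
    by_contra hcon
    push Not at hcon
    have := Nat.mul_le_mul_right (B + 1) hcon.le
    omega

theorem size_plug (C : Ctx) (s s' : PTree) : (plug C s).size + s'.size = (plug C s').size + s.size := by
  induction C with
  | nil => simp [plug]; omega
  | cons f C ih => obtain ⟨a, b⟩ := f; simp [plug, size_node]; omega

end PTree
namespace PTree
open scoped ENNReal

noncomputable def Q (α x : ℝ) : ℝ≥0∞ := ENNReal.ofReal (x ^ α)

theorem Q_mul (α : ℝ) {x y : ℝ} (hx : 0 ≤ x) (hy : 0 ≤ y) : Q α (x * y) = Q α x * Q α y := by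
  rw [Q, Q, Q, Real.mul_rpow hx hy, ENNReal.ofReal_mul (Real.rpow_nonneg hx _)]

theorem Q_one (α : ℝ) : Q α 1 = 1 := by simp [Q]

theorem Q_mono {α : ℝ} (h0 : 0 < α) {x y : ℝ} (hx : 0 ≤ x) (hy : x ≤ y) : Q α x ≤ Q α y :=
  ENNReal.ofReal_le_ofReal (Real.rpow_le_rpow hx hy h0.le)

theorem Q_pow (α : ℝ) {x : ℝ} (hx : 0 ≤ x) (n : ℕ) : Q α (x ^ n) = Q α x ^ n := by
  induction n with
  | zero => simp [Q_one]
  | succ n ih => rw [pow_succ, Q_mul α (pow_nonneg hx n) hx, ih, pow_succ]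

theorem Q_ne_top (α x : ℝ) : Q α x ≠ ∞ := ENNReal.ofReal_ne_top

noncomputable def W (α : ℝ) (t : PTree) : ℝ≥0∞ :=
  ENNReal.ofReal (t.weight (fun n => ((n - 1).factorial : ℝ) ^ α))

noncomputable def FW (α : ℝ) (ts : List PTree) : ℝ≥0∞ := (ts.map (W α)).prod

@[simp] theorem FW_nil (α : ℝ) : FW α [] = 1 := rfl
@[simp] theorem FW_cons (α : ℝ) (t ts) : FW α (t :: ts) = W α t * FW α ts := by simp [FW]
@[simp] theorem FW_append (α : ℝ) (a b) : FW α (a ++ b) = FW α a * FW α b := by simp [FW]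

theorem fweight_nonneg (α : ℝ) (ts : List PTree) :
    ∀ t ∈ ts, 0 ≤ t.weight (fun n => ((n - 1).factorial : ℝ) ^ α) := by
  induction ts using forest_induction with
  | h0 => simp
  | h1 cs rest h1 h2 =>
    rw [List.forall_mem_cons]
    refine ⟨?_, h2⟩
    rw [weight_node]
    refine mul_nonneg (by positivity) (List.prod_nonneg ?_)
    simpa using h1

theorem weight_nonneg (α : ℝ) (t : PTree) :
    0 ≤ t.weight (fun n => ((n - 1).factorial : ℝ) ^ α) := fweight_nonneg α [t] t (by simp)

theorem W_node (α : ℝ) (ts : List PTree) :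
    W α (node ts) = Q α (ts.length.factorial) * FW α ts := by
  rw [W, weight_node, ENNReal.ofReal_mul (by positivity)]
  congr 1
  induction ts with
  | nil => simp
  | cons t ts ih => simp [ENNReal.ofReal_mul (weight_nonneg α t), ih, W]

noncomputable def CW (α : ℝ) : Ctx → ℝ≥0∞
  | [] => 1
  | (a, b) :: C => Q α ((a.length + 1 + b.length).factorial) * FW α a * FW α b * CW α C

theorem W_plug (α : ℝ) (C : Ctx) (s : PTree) : W α (plug C s) = CW α C * W α s := by
  induction C with
  | nil => simp [plug, CW]
  | cons f C ih =>
    obtain ⟨a, b⟩ := f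
    simp only [plug, CW, W_node, FW_append, FW_cons, ih, List.length_append, List.length_cons]
    rw [show a.length + (b.length + 1) = a.length + 1 + b.length by omega]
    ring

open scoped Classical in
noncomputable def Z (α : ℝ) (n : ℕ) : ℝ≥0∞ :=
  ∑' ts : List PTree, if fsize ts = n then W α (node ts) else 0

theorem fsum_le (n : ℕ) (f : List PTree → ℝ≥0∞) :
    ∑' ts : List PTree, (if fsize ts = n then f ts else 0) ≤
      ∑ x ∈ BinaryTree.treesOfNumNodesEq n, f (dec x) := by
  refine (ENNReal.tsum_le_tsum_comp_of_surjective dec_surj _).trans ?_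
  rw [tsum_eq_sum (s := BinaryTree.treesOfNumNodesEq n)]
  · refine Finset.sum_le_sum fun x _ => ?_
    split_ifs <;> simp
  · intro x hx
    rw [BinaryTree.mem_treesOfNumNodesEq] at hx
    simp [fsize_dec, hx]

theorem Z_ne_top (α : ℝ) (n : ℕ) : Z α n ≠ ∞ := by
  refine ne_top_of_le_ne_top ?_ (fsum_le n _)
  rw [ENNReal.sum_ne_top]
  intro x _
  exact ENNReal.ofReal_ne_top

theorem Z_ge (α : ℝ) (n : ℕ) : Q α n.factorial ≤ Z α n := by
  refine le_trans ?_ (ENNReal.le_tsum (List.replicate n (node [])))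
  have h1 : fsize (List.replicate n (node [])) = n := by simp [fsize, size_node]
  rw [if_pos h1, W_node]
  have : FW α (List.replicate n (node [])) = 1 := by simp [FW, W_node, Q_one]
  simp [this]

theorem FW_bound {α : ℝ} (h0 : 0 < α) (B : ℕ) (ts : List PTree) :
    (∀ c ∈ ts, c.maxOutdeg ≤ B) → FW α ts * Q α B ^ ts.length ≤ Q α B ^ fsize ts := by
  induction ts using forest_induction with
  | h0 => simp
  | h1 cs rest h1 h2 =>
    intro h
    rw [List.forall_mem_cons, maxOutdeg_node] at h
    obtain ⟨⟨ha, hb⟩, hc⟩ := h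
    have hq : Q α (cs.length.factorial) ≤ Q α B ^ cs.length := by
      rw [← Q_pow _ (Nat.cast_nonneg _)]
      refine Q_mono h0 (Nat.cast_nonneg _) ?_
      exact_mod_cast (Nat.factorial_le_pow _).trans (Nat.pow_le_pow_left ha _)
    simp only [FW_cons, W_node, List.length_cons, fsize_cons, size_node]
    calc Q α (cs.length.factorial) * FW α cs * FW α rest * Q α B ^ (rest.length + 1)
        ≤ Q α B ^ cs.length * FW α cs * FW α rest * Q α B ^ (rest.length + 1) := by gcongr
      _ = (FW α cs * Q α B ^ cs.length) * (FW α rest * Q α B ^ rest.length) * Q α B := by ring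
      _ ≤ Q α B ^ fsize cs * Q α B ^ fsize rest * Q α B := by
        gcongr
        · exact h1 hb
        · exact h2 hc
      _ = _ := by ring

open scoped Classical in
theorem A0 {α : ℝ} (h0 : 0 < α) (n B : ℕ) :
    ∑' ts : List PTree, (if fsize ts = n ∧ (node ts).maxOutdeg ≤ B then W α (node ts) else 0) ≤
      4 ^ n * Q α B ^ n := by
  calc _ ≤ ∑' ts : List PTree, (if fsize ts = n then Q α B ^ n else 0) := by
        refine ENNReal.tsum_le_tsum fun ts => ?_
        by_cases h1 : fsize ts = n
        · by_cases h2 : (node ts).maxOutdeg ≤ B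
          · rw [if_pos ⟨h1, h2⟩, if_pos h1, W_node]
            rw [maxOutdeg_node] at h2
            have hq : Q α (ts.length.factorial) ≤ Q α B ^ ts.length := by
              rw [← Q_pow _ (Nat.cast_nonneg _)]
              refine Q_mono h0 (Nat.cast_nonneg _) ?_
              exact_mod_cast (Nat.factorial_le_pow _).trans (Nat.pow_le_pow_left h2.1 _)
            calc _ ≤ Q α B ^ ts.length * FW α ts := by gcongr
              _ = FW α ts * Q α B ^ ts.length := mul_comm _ _
              _ ≤ _ := by rw [← h1]; exact FW_bound h0 B ts h2.2
          · simp [h2]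
        · simp [h1]
    _ ≤ _ := by
        refine (fsum_le n _).trans ?_
        rw [Finset.sum_const, nsmul_eq_mul, BinaryTree.treesOfNumNodesEq_card_eq_catalan,
          catalan_eq_centralBinom_div]
        gcongr
        exact_mod_cast (Nat.div_le_self _ _).trans (Nat.centralBinom_le_four_pow n)

end PTree
namespace PTree
open scoped ENNReal

open scoped Classical in
theorem Z_eq (α : ℝ) (n : ℕ) : ∑' t : PTree, (if t.size = n + 1 then W α t else 0) = Z α n := by
  let e : List PTree ≃ PTree := ⟨node, children, fun _ => rfl, fun t => by cases t; rfl⟩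
  rw [← e.tsum_eq, Z]
  refine tsum_congr fun ts => ?_
  have : (e ts).size = n + 1 ↔ fsize ts = n := by
    change (node ts).size = n + 1 ↔ _
    rw [size_node]; omega
  simp only [this]
  rfl

theorem length_le_fsize (ts : List PTree) : ts.length ≤ fsize ts := by
  induction ts with
  | nil => simp
  | cons t ts ih => obtain ⟨cs⟩ := t; simp [size_node]; omega

theorem fsize_glue (a b : List PTree) (C : Ctx) (cs : List PTree) :
    fsize (glue ((a, b), C, node cs)) = fsize (glue ((a, b), C, node [])) + fsize cs := by
  have := size_plug C (node cs) (node [])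
  simp only [glue, fsize_append, fsize_cons, size_node, fsize_nil] at *
  omega

theorem W_glue (α : ℝ) (a b : List PTree) (C : Ctx) (s : PTree) :
    W α (node (glue ((a, b), C, s))) =
      Q α ((a.length + b.length + 1).factorial) * FW α a * FW α b * (CW α C * W α s) := by
  simp only [glue, W_node, FW_append, FW_cons, W_plug, List.length_append, List.length_cons]
  rw [show a.length + (b.length + 1) = a.length + b.length + 1 by omega]
  ring

open scoped Classical in
theorem A1 {α : ℝ} (h0 : 0 < α) (n B L M : ℕ) (hB : 0 < B) (hL : n < L * (B + 1)) :
    ∑' ts : List PTree, (if (∃ m : Mk, glue m = ts ∧ (fsize (glue m) = n ∧ (glue m).length < M ∧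
      B < m.2.2.children.length)) then W α (node ts) else 0) ≤
      Q α (M / B) * (M * (L * Z α n)) := by
  refine (sectLemma glue _ (fun ts => W α (node ts))).trans ?_
  let g : PTree → ℝ≥0∞ := fun t => if t.size = n + 1 then W α t else 0
  let H' : Ctx × PTree → ℝ≥0∞ := fun x => if B < x.2.children.length then g (plug x.1 x.2) else 0
  let H : ℕ × (Ctx × PTree) → ℝ≥0∞ := fun x => if x.1 < M then H' x.2 else 0
  let Φ : Mk → ℕ × (Ctx × PTree) := fun m =>
    (m.1.1.length, m.2.1, node (m.2.2.children ++ [node (m.1.1 ++ m.1.2)]))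
  have hΦ : Function.Injective Φ := by
    rintro ⟨⟨a, b⟩, C, ⟨cs⟩⟩ ⟨⟨a', b'⟩, C', ⟨cs'⟩⟩ h
    simp only [Φ, children_node, Prod.mk.injEq, node.injEq] at h
    obtain ⟨hl, rfl, h⟩ := h
    obtain ⟨rfl, h⟩ := List.append_inj' h rfl
    have h' : a ++ b = a' ++ b' := by simpa using h
    obtain ⟨rfl, rfl⟩ := List.append_inj h' hl
    rfl
  have hd : ∑' x, H' x ≤ L * Z α n := by
    rw [← Z_eq]
    refine multLemma (fun x : Ctx × PTree => plug x.1 x.2) (fun x => B < x.2.children.length) g L ?_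
    intro t ht
    refine big_marks n B L hL t ?_
    by_contra hcon
    exact ht (by simp [g, hcon])
  have hc : ∑' x, H x ≤ M * ∑' x, H' x := by
    refine multLemma (fun x : ℕ × (Ctx × PTree) => x.2) (fun x => x.1 < M) H' M ?_
    intro y _
    refine ⟨(List.range M).map (fun i => (i, y)), ?_, by simp⟩
    rintro ⟨i, x⟩ hi rfl
    simpa using hi
  calc _ ≤ ∑' m, Q α (M / B) * H (Φ m) := by
        refine ENNReal.tsum_le_tsum ?_
        rintro ⟨⟨a, b⟩, C, ⟨cs⟩⟩
        split_ifs with h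
        · obtain ⟨h1, h2, h3⟩ := h
          simp only [children_node] at h3
          have hlen : a.length + b.length + 1 < M := by
            simp [glue] at h2; omega
          have hsz : (plug C (node (cs ++ [node (a ++ b)]))).size = n + 1 := by
            have := size_plug C (node cs) (node (cs ++ [node (a ++ b)]))
            simp [glue, size_node] at *
            omega
          have hH : H (Φ ((a, b), C, node cs)) = W α (plug C (node (cs ++ [node (a ++ b)]))) := by
            simp only [H, Φ, H', g, children_node]
            rw [if_pos (by omega), if_pos (by simp; omega), if_pos hsz]
          rw [hH, W_glue, W_plug]
          simp only [W_node, FW_append, FW_cons, FW_nil, List.length_append, List.length_cons,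
            List.length_nil]
          have key : Q α ((a.length + b.length + 1).factorial) * Q α (cs.length.factorial) ≤
              Q α (M / B) * (Q α ((cs.length + (0 + 1)).factorial) *
                Q α ((a.length + b.length).factorial)) := by
            rw [← Q_mul _ (by positivity) (by positivity), ← Q_mul _ (by positivity) (by positivity),
              ← Q_mul _ (by positivity) (by positivity)]
            refine Q_mono h0 (by positivity) ?_
            rw [zero_add, Nat.factorial_succ, Nat.factorial_succ]
            push_cast
            have hBr : (0:ℝ) < B := by exact_mod_cast hB
            rw [div_mul_eq_mul_div, le_div_iff₀ hBr]
            have e1 : ((a.length : ℝ) + b.length + 1) ≤ M := by exact_mod_cast hlen.le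
            have e2 : (B : ℝ) ≤ cs.length + 1 := by exact_mod_cast (by omega : B ≤ cs.length + 1)
            calc ((a.length : ℝ) + b.length + 1) * ((a.length + b.length).factorial : ℝ) *
                  (cs.length.factorial : ℝ) * B
                = (((a.length : ℝ) + b.length + 1) * B) * (((a.length + b.length).factorial : ℝ) *
                  (cs.length.factorial : ℝ)) := by ring
              _ ≤ (M * (cs.length + 1)) * (((a.length + b.length).factorial : ℝ) *
                  (cs.length.factorial : ℝ)) := by gcongr
              _ = _ := by ring
          calc _ = (Q α ((a.length + b.length + 1).factorial) * Q α (cs.length.factorial)) *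
                (FW α a * FW α b * CW α C * FW α cs) := by ring
            _ ≤ _ := mul_le_mul_left key _
            _ = _ := by ring
        · exact zero_le
    _ = Q α (M / B) * ∑' m, H (Φ m) := ENNReal.tsum_mul_left
    _ ≤ _ := by
      refine mul_le_mul_right ?_ _
      refine (ENNReal.tsum_comp_le_tsum_of_injective hΦ H).trans (hc.trans ?_)
      gcongr

open scoped Classical in
theorem A2 {α : ℝ} (h0 : 0 < α) (n B M K : ℕ) (ε : ℝ≥0∞)
    (hε : ∀ D, B < D → D ≤ n →
      ∑' k : ℕ, (if K < k ∧ k + M ≤ D then Q α (1 / (D.choose k : ℝ)) else 0) ≤ ε) :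
    ∑' ts : List PTree, (if (∃ m : Mk, glue m = ts ∧ (fsize (glue m) = n ∧ M ≤ (glue m).length ∧
      K < m.2.2.children.length ∧ B < (glue m).length + m.2.2.children.length))
        then W α (node ts) else 0) ≤ n * (ε * Z α n) := by
  refine (sectLemma glue _ (fun ts => W α (node ts))).trans ?_
  let G : List PTree × List PTree → ℝ≥0∞ := fun x =>
    if fsize x.1 + fsize x.2 = n ∧ M ≤ x.1.length ∧ K < x.2.length ∧ B < x.1.length + x.2.length
      then W α (node x.1) * W α (node x.2) else 0
  let ψ : Mk → List PTree × List PTree := fun m => (glue (m.1, m.2.1, node []), m.2.2.children)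
  let H : ℕ × List PTree → ℝ≥0∞ := fun x =>
    if fsize x.2 = n ∧ B < x.2.length ∧ K < x.1 ∧ x.1 + M ≤ x.2.length
      then Q α (1 / (x.2.length.choose x.1 : ℝ)) * W α (node x.2) else 0
  let Φ : List PTree × List PTree → ℕ × List PTree := fun x => (x.2.length, x.1 ++ x.2)
  have hΦ : Function.Injective Φ := by
    rintro ⟨u, c⟩ ⟨u', c'⟩ h
    simp only [Φ, Prod.mk.injEq] at h
    obtain ⟨rfl, rfl⟩ := List.append_inj' h.2 h.1
    rfl
  have s1 : ∑' m, (if True then G (ψ m) else 0) ≤ n * ∑' x, G x := by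
    refine multLemma ψ (fun _ => True) G n ?_
    rintro ⟨us, cs⟩ hG
    have hn : fsize us + fsize cs = n := by
      by_contra hcon
      exact hG (by simp [G, hcon])
    obtain ⟨l, hl, hlen, -⟩ := marks us
    refine ⟨l.map (fun m => (m.1, m.2.1, node cs)), ?_, by simp; omega⟩
    rintro ⟨ab, C, ⟨cs'⟩⟩ - h
    simp only [ψ, children_node, Prod.mk.injEq] at h
    obtain ⟨h, rfl⟩ := h
    exact List.mem_map.2 ⟨_, hl _ h, rfl⟩
  have s2 : ∑' x, G x ≤ ∑' x, H (Φ x) := by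
    refine ENNReal.tsum_le_tsum ?_
    rintro ⟨us, cs⟩
    simp only [G, H, Φ]
    split_ifs with h h' h'
    · simp only [W_node, FW_append, List.length_append]
      have key : Q α (us.length.factorial) * Q α (cs.length.factorial) ≤
          Q α (1 / ((us.length + cs.length).choose cs.length : ℝ)) *
            Q α ((us.length + cs.length).factorial) := by
        rw [← Q_mul _ (by positivity) (by positivity), ← Q_mul _ (by positivity) (by positivity)]
        refine Q_mono h0 (by positivity) ?_
        have hch : 0 < (us.length + cs.length).choose cs.length :=
          Nat.choose_pos (Nat.le_add_left _ _)
        have hchr : (0:ℝ) < ((us.length + cs.length).choose cs.length : ℝ) := by exact_mod_cast hch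
        have := Nat.choose_mul_factorial_mul_factorial (Nat.le_add_left cs.length us.length)
        rw [Nat.add_sub_cancel] at this
        rw [div_mul_eq_mul_div, le_div_iff₀ hchr, one_mul]
        apply le_of_eq
        rw [← this]; push_cast; ring
      calc _ = (Q α (us.length.factorial) * Q α (cs.length.factorial)) * (FW α us * FW α cs) := by ring
        _ ≤ _ := mul_le_mul_left key _
        _ = _ := by ring
    · exfalso; apply h'
      simp only [fsize_append, List.length_append]
      omega
    · exact zero_le
    · exact zero_le
  have s3 : ∑' x, H x ≤ ε * Z α n := by
    rw [ENNReal.tsum_prod', ENNReal.tsum_comm, Z, ← ENNReal.tsum_mul_left]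
    refine ENNReal.tsum_le_tsum fun ts => ?_
    by_cases h1 : fsize ts = n
    · rw [if_pos h1]
      by_cases h2 : B < ts.length
      · have := hε ts.length h2 (h1 ▸ length_le_fsize ts)
        refine le_trans (le_of_eq ?_) (mul_le_mul_left this _)
        rw [← ENNReal.tsum_mul_right]
        refine tsum_congr fun k => ?_
        simp only [H, h1, h2, true_and]
        split_ifs <;> simp
      · simp [H, h2]
    · simp [H, h1]
  calc _ ≤ ∑' m, (if True then G (ψ m) else 0) := by
        refine ENNReal.tsum_le_tsum ?_
        rintro ⟨⟨a, b⟩, C, ⟨cs⟩⟩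
        split_ifs with h
        · simp only [G, ψ, children_node] at h ⊢
          rw [fsize_glue] at h
          have hl : (glue ((a, b), C, node cs)).length = (glue ((a, b), C, node [])).length := by
            simp [glue]
          rw [hl] at h
          rw [if_pos h, W_glue, W_glue, W_node α []]
          apply le_of_eq
          simp [Q_one]
          ring
        · exact zero_le
    _ ≤ n * ∑' x, G x := s1
    _ ≤ n * (ε * Z α n) := by
      gcongr
      exact s2.trans ((ENNReal.tsum_comp_le_tsum_of_injective hΦ H).trans s3)

end PTree
namespace PTree
open scoped ENNReal

theorem choose_ge_aux (D j k : ℕ) (h1 : j ≤ k) (h2 : k ≤ D / 2) : D.choose j ≤ D.choose k := by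
  induction k, h1 using Nat.le_induction with
  | base => exact le_rfl
  | succ k hk ih => exact (ih (by omega)).trans (Nat.choose_le_succ_of_lt_half_left (by omega))

theorem choose_ge (D j k : ℕ) (h1 : j ≤ k) (h2 : k + j ≤ D) : D.choose j ≤ D.choose k := by
  by_cases h : k ≤ D / 2
  · exact choose_ge_aux D j k h1 h
  · rw [← Nat.choose_symm (by omega : k ≤ D)]
    exact choose_ge_aux D j (D - k) (by omega) (by omega)

theorem inv_choose_le (B D j k : ℕ) (h1 : j ≤ k) (h2 : k + j ≤ D) (hB : B < D) (hB0 : 0 < B) :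
    1 / (D.choose k : ℝ) ≤ (j.factorial * 2 ^ j : ℝ) / (B : ℝ) ^ j := by
  have hc : (0 : ℝ) < D.choose j := by exact_mod_cast Nat.choose_pos (by omega)
  have hBr : (0 : ℝ) < B := by exact_mod_cast hB0
  have h3 : (D.choose j : ℝ) ≤ D.choose k := by exact_mod_cast choose_ge D j k h1 h2
  have h4 := Nat.pow_le_choose (α := ℝ) j D
  have h5 : ((B : ℝ) / 2) ^ j ≤ ((D + 1 - j : ℕ) : ℝ) ^ j := by
    gcongr
    have : B ≤ 2 * (D + 1 - j) := by omega
    have : (B : ℝ) ≤ 2 * ((D + 1 - j : ℕ) : ℝ) := by exact_mod_cast this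
    linarith
  have hf : (0 : ℝ) < j.factorial := by positivity
  rw [div_le_iff₀ hf] at h4
  rw [div_pow] at h5
  have h6 : (B : ℝ) ^ j ≤ D.choose k * (j.factorial * 2 ^ j) := by
    have := h5.trans (h4.trans (mul_le_mul_of_nonneg_right h3 hf.le))
    rw [div_le_iff₀ (by positivity)] at this
    linarith
  rw [div_le_div_iff₀ (hc.trans_le h3) (by positivity)]
  linarith

open scoped Classical in
theorem eps_bound {α : ℝ} (h0 : 0 < α) (n B M K : ℕ) (hKM : K + 1 ≤ M) (hB : 2 * M ≤ B)
    (D : ℕ) (hBD : B < D) (hDn : D ≤ n) :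
    ∑' k : ℕ, (if K < k ∧ k + M ≤ D then Q α (1 / (D.choose k : ℝ)) else 0) ≤
      M * Q α (((K + 1).factorial * 2 ^ (K + 1) : ℝ) / (B : ℝ) ^ (K + 1)) +
      n * Q α ((M.factorial * 2 ^ M : ℝ) / (B : ℝ) ^ M) := by
  have hs : ∀ (m : ℕ) (c : ℝ≥0∞), ∑' k : ℕ, (if k < m then c else 0) = m * c := by
    intro m c
    rw [tsum_eq_sum (s := Finset.range m)]
    · rw [Finset.sum_congr rfl (g := fun _ => c)]
      · simp
      · intro x hx; simp [Finset.mem_range.1 hx]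
    · intro x hx; simp at hx; simp [hx]
  rw [← hs, ← hs, ← ENNReal.tsum_add]
  refine ENNReal.tsum_le_tsum fun k => ?_
  by_cases h : K < k ∧ k + M ≤ D
  · rw [if_pos h]
    by_cases hk : k < M
    · rw [if_pos hk]
      refine le_trans (Q_mono h0 (by positivity) ?_) le_self_add
      exact inv_choose_le B D (K + 1) k (by omega) (by omega) hBD (by omega)
    · rw [if_pos (by omega : k < n)]
      refine le_trans (Q_mono h0 (by positivity) ?_) le_add_self
      exact inv_choose_le B D M k (by omega) (by omega) hBD (by omega)
  · rw [if_neg h]; exact zero_le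

theorem A0' {α : ℝ} (h0 : 0 < α) (n L : ℕ) (hL : Real.exp 1 * 8 ^ (1 / α) ≤ L) :
    (4 : ℝ≥0∞) ^ n * Q α ((n / L : ℕ) : ℝ) ^ n ≤ ENNReal.ofReal ((1 / 2) ^ n) * Z α n := by
  have hLpos : (0 : ℝ) < L := lt_of_lt_of_le (by positivity) hL
  have hq : Q α (Real.exp 1 / L) ≤ ENNReal.ofReal (1 / 8) := by
    refine ENNReal.ofReal_le_ofReal ?_
    have : Real.exp 1 / L ≤ (8 ^ (1 / α))⁻¹ := by
      rw [← one_div, div_le_div_iff₀ hLpos (by positivity)]; linarith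
    refine (Real.rpow_le_rpow (by positivity) this h0.le).trans ?_
    rw [Real.inv_rpow (by positivity), ← Real.rpow_mul (by norm_num), one_div_mul_cancel h0.ne']
    norm_num
  have h1 : (((n / L : ℕ) : ℝ)) ^ n ≤ n.factorial * (Real.exp 1 / L) ^ n := by
    have a : ((n / L : ℕ) : ℝ) ≤ n / L := Nat.cast_div_le
    have b := Real.pow_div_factorial_le_exp (n : ℝ) (Nat.cast_nonneg _) n
    rw [div_le_iff₀ (by positivity)] at b
    calc (((n / L : ℕ) : ℝ)) ^ n ≤ ((n : ℝ) / L) ^ n := by gcongr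
      _ = (n : ℝ) ^ n / L ^ n := div_pow _ _ _
      _ ≤ Real.exp n * n.factorial / L ^ n := by gcongr
      _ = _ := by
        rw [div_pow, ← Real.exp_nat_mul, mul_one]; ring
  calc (4 : ℝ≥0∞) ^ n * Q α ((n / L : ℕ) : ℝ) ^ n
      = 4 ^ n * Q α (((n / L : ℕ) : ℝ) ^ n) := by rw [Q_pow _ (by positivity)]
    _ ≤ 4 ^ n * Q α (n.factorial * (Real.exp 1 / L) ^ n) := by
        gcongr; exact Q_mono h0 (by positivity) h1
    _ = 4 ^ n * (Q α (n.factorial) * Q α (Real.exp 1 / L) ^ n) := by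
        rw [Q_mul _ (by positivity) (by positivity), Q_pow _ (by positivity)]
    _ ≤ 4 ^ n * (Z α n * ENNReal.ofReal (1 / 8) ^ n) := by
        gcongr; exact Z_ge α n
    _ = (4 * ENNReal.ofReal (1 / 8)) ^ n * Z α n := by rw [mul_pow]; ring
    _ = _ := by
        rw [show (4 : ℝ≥0∞) = ENNReal.ofReal 4 by simp, ← ENNReal.ofReal_mul (by norm_num),
          ← ENNReal.ofReal_pow (by norm_num)]
        norm_num

noncomputable def rho (α : ℝ) (K L M : ℕ) (x : ℝ) : ℝ :=
  (M / x) ^ α * (M * L) + (2 * L * x) *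
    (M * (((K + 1).factorial * 2 ^ (K + 1) : ℝ) / x ^ (K + 1)) ^ α +
      (2 * L * x) * ((M.factorial * 2 ^ M : ℝ) / x ^ M) ^ α)

open scoped Classical in
theorem total {α : ℝ} (h0 : 0 < α) (n K L M : ℕ) (hL : Real.exp 1 * 8 ^ (1 / α) ≤ L)
    (hKM : K + 1 ≤ M) (hB : 2 * M ≤ n / L) :
    ∑' ts : List PTree, (if fsize ts = n ∧ ∃ c ∈ ts, K < c.maxOutdeg then W α (node ts) else 0) ≤
      ENNReal.ofReal ((1 / 2) ^ n + rho α K L M ((n / L : ℕ) : ℝ)) * Z α n := by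
  have hLpos : 0 < L := by
    have : (0 : ℝ) < L := lt_of_lt_of_le (by positivity) hL
    exact_mod_cast this
  set B := n / L with hBdef
  have hnL : n < L * (B + 1) := by
    have := Nat.lt_mul_div_succ n hLpos
    simpa using this
  have hn2 : (n : ℝ) ≤ 2 * L * B := by
    have : n ≤ 2 * L * B := by nlinarith
    exact_mod_cast this
  have hB0 : 0 < B := by omega
  have hBr : (0 : ℝ) < B := by exact_mod_cast hB0
  have h_split : ∀ ts : List PTree,
      (if fsize ts = n ∧ ∃ c ∈ ts, K < c.maxOutdeg then W α (node ts) else 0) ≤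
      (if fsize ts = n ∧ (node ts).maxOutdeg ≤ B then W α (node ts) else 0) +
      ((if (∃ m : Mk, glue m = ts ∧ (fsize (glue m) = n ∧ (glue m).length < M ∧
        B < m.2.2.children.length)) then W α (node ts) else 0) +
      (if (∃ m : Mk, glue m = ts ∧ (fsize (glue m) = n ∧ M ≤ (glue m).length ∧
      K < m.2.2.children.length ∧ B < (glue m).length + m.2.2.children.length))
        then W α (node ts) else 0)) := by
    intro ts
    by_cases h : fsize ts = n ∧ ∃ c ∈ ts, K < c.maxOutdeg
    · rw [if_pos h]
      obtain ⟨h1, h2⟩ := h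
      by_cases c0 : (node ts).maxOutdeg ≤ B
      · rw [if_pos ⟨h1, c0⟩]; exact le_self_add
      refine le_trans ?_ le_add_self
      rw [maxOutdeg_node] at c0
      by_cases c1 : ts.length ≤ B
      · obtain ⟨m, hm, hmB⟩ := exists_mark B ts (by
          by_contra hcon
          push Not at hcon
          exact c0 ⟨c1, hcon⟩)
        by_cases c2 : ts.length < M
        · rw [if_pos ⟨m, hm, by rw [hm]; exact ⟨h1, c2, hmB⟩⟩]; exact le_self_add
        · refine le_trans ?_ le_add_self
          rw [if_pos ⟨m, hm, by rw [hm]; exact ⟨h1, by omega, by omega, by omega⟩⟩]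
      · obtain ⟨m, hm, hmB⟩ := exists_mark K ts h2
        refine le_trans ?_ le_add_self
        rw [if_pos ⟨m, hm, by rw [hm]; exact ⟨h1, by omega, by omega, by omega⟩⟩]
    · rw [if_neg h]; exact zero_le
  refine (ENNReal.tsum_le_tsum h_split).trans ?_
  rw [ENNReal.tsum_add, ENNReal.tsum_add]
  have b0 := (A0 h0 n B).trans (A0' h0 n L hL)
  have b1 := A1 h0 n B L M hB0 hnL
  have b2 := A2 h0 n B M K _ (eps_bound h0 n B M K hKM hB)
  refine (add_le_add b0 (add_le_add b1 b2)).trans ?_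
  have hnE : (n : ℝ≥0∞) ≤ ENNReal.ofReal (2 * L * B) := by
    rw [← ENNReal.ofReal_natCast]; exact ENNReal.ofReal_le_ofReal hn2
  have hX : (0 : ℝ) ≤ 2 * L * B := by positivity
  have hE : ENNReal.ofReal ((1 / 2) ^ n + rho α K L M (B : ℝ)) = ENNReal.ofReal ((1 / 2) ^ n) +
      (Q α (M / B) * (M * L) + ENNReal.ofReal (2 * L * B) *
        (M * Q α (((K + 1).factorial * 2 ^ (K + 1) : ℝ) / (B : ℝ) ^ (K + 1)) +
        ENNReal.ofReal (2 * L * B) * Q α ((M.factorial * 2 ^ M : ℝ) / (B : ℝ) ^ M))) := by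
    unfold rho
    generalize (2 * L * B : ℝ) = X at hX
    rw [ENNReal.ofReal_add (by positivity) (by positivity),
      ENNReal.ofReal_add (by positivity) (by positivity),
      ENNReal.ofReal_mul (by positivity), ENNReal.ofReal_mul (by positivity),
      ENNReal.ofReal_mul (p := X) (by positivity),
      ENNReal.ofReal_add (by positivity) (by positivity),
      ENNReal.ofReal_mul (by positivity), ENNReal.ofReal_mul (p := X) (by positivity),
      ENNReal.ofReal_natCast, ENNReal.ofReal_natCast]
    rfl
  rw [hE, add_mul (ENNReal.ofReal ((1 / 2) ^ n)), add_mul (Q α (M / B) * (M * L))]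
  refine add_le_add le_rfl (add_le_add ?_ ?_)
  · apply le_of_eq; ring
  · rw [← mul_assoc]
    refine mul_le_mul_left ?_ _
    refine mul_le_mul' hnE (add_le_add le_rfl ?_)
    exact mul_le_mul' hnE le_rfl

theorem tendsto_aux (α C : ℝ) (hC : 0 ≤ C) (p : ℝ) (j : ℕ) (h : p < j * α) :
    Tendsto (fun x : ℝ => x ^ p * (C / x ^ j) ^ α) atTop (nhds 0) := by
  have h1 := (tendsto_rpow_neg_atTop (y := j * α - p) (by linarith)).const_mul (C ^ α)
  rw [mul_zero] at h1
  refine h1.congr' ?_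
  filter_upwards [eventually_gt_atTop 0] with x hx
  rw [Real.div_rpow hC (by positivity), ← Real.rpow_natCast, ← Real.rpow_mul hx.le, neg_sub,
    Real.rpow_sub hx]
  ring

theorem rho_tendsto (α : ℝ) (h0 : 0 < α) (K L M : ℕ) (hK : 1 < ((K + 1 : ℕ) : ℝ) * α)
    (hM : 2 < M * α) : Tendsto (rho α K L M) atTop (nhds 0) := by
  have t0 := (tendsto_aux α M (Nat.cast_nonneg _) 0 1 (by simpa using h0)).mul_const ((M : ℝ) * L)
  have t1 := (tendsto_aux α ((K + 1).factorial * 2 ^ (K + 1)) (by positivity) 1 (K + 1) hK).const_mul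
    (2 * L * M : ℝ)
  have t2 := (tendsto_aux α (M.factorial * 2 ^ M) (by positivity) 2 M hM).const_mul
    (4 * L * L : ℝ)
  have := (t0.add t1).add t2
  simp only [mul_zero, zero_mul, add_zero] at this
  refine this.congr fun x => ?_
  rw [rho, Real.rpow_zero, Real.rpow_one, pow_one, Real.rpow_ofNat]
  ring

open scoped Classical in
theorem toReal_eq (α : ℝ) (n : ℕ) (P : PTree → Prop) :
    ∑' t : {t : PTree // t.size = n + 1 ∧ P t}, t.1.weight (fun n => ((n - 1).factorial : ℝ) ^ α) =
    (∑' ts : List PTree, if fsize ts = n ∧ P (node ts) then W α (node ts) else 0).toReal := by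
  let e : List PTree ≃ PTree := ⟨node, children, fun _ => rfl, fun t => by cases t; rfl⟩
  have h1 : ∑' ts : List PTree, (if fsize ts = n ∧ P (node ts) then W α (node ts) else 0) =
      ∑' t : PTree, Set.indicator {t : PTree | t.size = n + 1 ∧ P t} (W α) t := by
    rw [← e.tsum_eq]
    refine tsum_congr fun ts => ?_
    have : e ts ∈ {t : PTree | t.size = n + 1 ∧ P t} ↔ fsize ts = n ∧ P (node ts) := by
      change (node ts).size = n + 1 ∧ P (node ts) ↔ _
      rw [size_node, add_comm, Nat.add_right_cancel_iff]
    rw [Set.indicator_apply]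
    simp only [this]
    rfl
  rw [h1, ← tsum_subtype, ENNReal.tsum_toReal_eq
    (f := fun t : {t : PTree | t.size = n + 1 ∧ P t} => W α t.1) (fun _ => ENNReal.ofReal_ne_top)]
  refine tsum_congr fun t => ?_
  exact (ENNReal.toReal_ofReal (weight_nonneg α _)).symm

theorem Zfun_eq (α : ℝ) (n : ℕ) :
    Zfun (fun n => ((n - 1).factorial : ℝ) ^ α) (n + 1) = (Z α n).toReal := by
  have := toReal_eq α n (fun _ => True)
  rw [Zfun, ← (Equiv.subtypeEquivRight (p := fun t : PTree => t.size = n + 1 ∧ True)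
    (q := fun t => t.size = n + 1) (by simp)).tsum_eq]
  refine Eq.trans this ?_
  simp only [and_true]
  rw [Z]

theorem nu_nonneg (α : ℝ) (n : ℕ) (P : PTree → Prop) :
    0 ≤ nu (fun n => ((n - 1).factorial : ℝ) ^ α) (n + 1) P := by
  rw [nu, Zfun_eq, toReal_eq]
  positivity

end PTree

/-- Theorem 3 (ii): with `w_n = ((n−1)!)^α`, `0 < α < 1`, `K = ⌊1/α⌋`, the probability that
some vertex other than `s` has degree `> K + 1` (i.e. outdegree `> K`) tends to 0. -/
theorem stmt_12 (α : ℝ) (h0 : 0 < α) (h1 : α < 1) :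
    Tendsto (fun N : ℕ =>
        nu (fun n => ((n - 1).factorial : ℝ) ^ α) N
          (fun t => ∃ c ∈ t.children, ⌊1 / α⌋₊ < c.maxOutdeg))
      atTop (nhds 0) := by
  classical
  set K := ⌊1 / α⌋₊ with hKdef
  have hK : 1 < ((K + 1 : ℕ) : ℝ) * α := by
    have := Nat.lt_floor_add_one (1 / α)
    rw [div_lt_iff₀ h0] at this
    push_cast
    exact this
  obtain ⟨L, hL⟩ := exists_nat_ge (Real.exp 1 * 8 ^ (1 / α))
  obtain ⟨M', hM'⟩ := exists_nat_gt (2 / α)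
  rw [div_lt_iff₀ h0] at hM'
  let M := M' + (K + 1)
  have hM : 2 < (M : ℝ) * α := by
    refine hM'.trans_le ?_
    have : (M' : ℝ) ≤ M := by exact_mod_cast Nat.le_add_right _ _
    gcongr
  have hLpos : 0 < L := by
    have : (0 : ℝ) < L := lt_of_lt_of_le (by positivity) hL
    exact_mod_cast this
  have hdiv : Tendsto (fun n : ℕ => n / L) atTop atTop := by
    refine tendsto_atTop.2 fun b => ?_
    filter_upwards [eventually_ge_atTop (b * L)] with n hn
    exact (Nat.le_div_iff_mul_le hLpos).2 hn
  rw [← tendsto_add_atTop_iff_nat 1]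
  have hlim : Tendsto (fun n : ℕ => (1 / 2 : ℝ) ^ n + PTree.rho α K L M ((n / L : ℕ) : ℝ)) atTop
      (nhds 0) := by
    have a := tendsto_pow_atTop_nhds_zero_of_lt_one (r := (1 / 2 : ℝ)) (by norm_num) (by norm_num)
    have b := (PTree.rho_tendsto α h0 K L M hK hM).comp
      ((tendsto_natCast_atTop_atTop (R := ℝ)).comp hdiv)
    simpa using a.add b
  refine tendsto_of_tendsto_of_tendsto_of_le_of_le' tendsto_const_nhds hlim
    (Eventually.of_forall fun n => PTree.nu_nonneg α n _) ?_
  filter_upwards [hdiv.eventually_ge_atTop (2 * M)] with n hn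
  have hr : 0 ≤ (1 / 2 : ℝ) ^ n + PTree.rho α K L M ((n / L : ℕ) : ℝ) := by
    unfold PTree.rho; positivity
  have key := PTree.total h0 n K L M hL (Nat.le_add_left _ _) hn
  rw [nu, PTree.Zfun_eq, PTree.toReal_eq]
  refine div_le_of_le_mul₀ ENNReal.toReal_nonneg hr ?_
  have := ENNReal.toReal_mono (ENNReal.mul_ne_top ENNReal.ofReal_ne_top (PTree.Z_ne_top α n)) key
  rw [ENNReal.toReal_mul, ENNReal.toReal_ofReal hr] at this
  refine le_trans (le_of_eq ?_) this
  congr 1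
  refine tsum_congr fun ts => ?_
  simp only [PTree.children_node]
  congr
end

section
/- With weights w_n = ((n−1)!)^α, 0 < α < 1, the degree σ(s) of the vertex adjacent to the root in the random tree T_N satisfies σ(s) = N − O_p(N^{1−α}); that is, (N − σ(s))/N^{1−α} is bounded in probability as N → ∞. -/
open Filter

noncomputable section
namespace P13
open Finset

theorem size_node (ts : List PTree) : (PTree.node ts).size = 1 + (ts.map PTree.size).sum := by
  rw [PTree.size, List.attach_map_val (f := PTree.size)]

theorem weight_node (w : ℕ → ℝ) (ts : List PTree) :
    (PTree.node ts).weight w = w (ts.length + 1) * (ts.map (PTree.weight w)).prod := by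
  rw [PTree.weight, List.attach_map_val (f := PTree.weight w)]

def fs (l : List PTree) : ℕ := (l.map PTree.size).sum
def fw (w : ℕ → ℝ) (l : List PTree) : ℝ := (l.map (PTree.weight w)).prod

def peel (d : ℕ) (l : List PTree) : List PTree := PTree.node (l.take d) :: l.drop d

theorem fs_peel (d : ℕ) (l : List PTree) : fs (peel d l) = fs l + 1 := by
  have : fs l = fs (l.take d) + fs (l.drop d) := by
    unfold fs
    rw [← List.sum_append, ← List.map_append, List.take_append_drop]
  rw [this]
  simp only [fs, peel, size_node, List.map_cons, List.sum_cons]; ring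

theorem fw_peel (w : ℕ → ℝ) (d : ℕ) (l : List PTree) (h : d ≤ l.length) :
    fw w (peel d l) = w (d + 1) * fw w l := by
  have : fw w l = fw w (l.take d) * fw w (l.drop d) := by
    unfold fw
    rw [← List.prod_append, ← List.map_append, List.take_append_drop]
  rw [this]
  simp only [fw, peel, weight_node, List.map_cons, List.prod_cons, List.length_take, min_eq_left h]; ring

open Classical in
def forests : ℕ → ℕ → Finset (List PTree)
  | 0, 0 => {[]}
  | 0, _ + 1 => ∅
  | _ + 1, 0 => ∅
  | n + 1, k + 1 => (range (n + 1)).biUnion fun d => (forests n (k + d)).image (peel d)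

theorem len_le_fs (l : List PTree) : l.length ≤ fs l := by
  induction l with
  | nil => simp
  | cons t l ih =>
    obtain ⟨ts⟩ := t
    simp only [fs, List.map_cons, List.sum_cons, List.length_cons, size_node] at *
    omega

theorem mem_forests (n k : ℕ) (l : List PTree) :
    l ∈ forests n k ↔ l.length = k ∧ fs l = n := by
  induction n generalizing k l with
  | zero =>
    cases k with
    | zero => 
      simp only [forests, mem_singleton, List.length_eq_zero_iff]
      constructor
      · rintro rfl; simp [fs]
      · exact fun h => h.1
    | succ k =>
      simp only [forests, notMem_empty, false_iff]
      rintro ⟨h1, h2⟩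
      have := len_le_fs l
      omega
  | succ n ih =>
    cases k with
    | zero =>
      simp only [forests, notMem_empty, false_iff, List.length_eq_zero_iff]
      rintro ⟨rfl, h2⟩
      simp [fs] at h2
    | succ k =>
      simp only [forests, mem_biUnion, mem_range, mem_image, ih]
      constructor
      · rintro ⟨d, hd, l', ⟨h1, h2⟩, rfl⟩
        refine ⟨by simp [peel, h1], by rw [fs_peel, h2]⟩
      · rintro ⟨h1, h2⟩
        match l, h1, h2 with
        | PTree.node ts :: l, h1, h2 =>
          have hp : peel ts.length (ts ++ l) = PTree.node ts :: l := by simp [peel]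
          have hs := fs_peel ts.length (ts ++ l)
          rw [hp, h2] at hs
          have := len_le_fs (ts ++ l)
          simp only [List.length_append, List.length_cons] at this h1
          exact ⟨ts.length, by omega, ts ++ l, ⟨by simp; omega, by omega⟩, hp⟩

def f (w : ℕ → ℝ) (n k : ℕ) : ℝ := ∑ l ∈ forests n k, fw w l

theorem f_zero_of_lt (w : ℕ → ℝ) {n k : ℕ} (h : n < k) : f w n k = 0 := by
  apply sum_eq_zero
  intro l hl
  rw [mem_forests] at hl
  have := len_le_fs l
  omega

theorem f_succ (w : ℕ → ℝ) (n k : ℕ) :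
    f w (n + 1) (k + 1) = ∑ d ∈ range (n + 1), w (d + 1) * f w n (k + d) := by
  classical
  simp only [f, forests]
  rw [sum_biUnion]
  · apply sum_congr rfl
    intro d _
    rw [sum_image, mul_sum]
    · apply sum_congr rfl
      intro l hl
      rw [mem_forests] at hl
      rw [fw_peel]; omega
    · intro a _ b _ hab
      simp only [peel, List.cons.injEq, PTree.node.injEq] at hab
      rw [← List.take_append_drop d a, hab.1, hab.2, List.take_append_drop]
  · intro d _ d' _ hne
    simp only [Function.onFun, disjoint_left, mem_image, mem_forests]
    rintro _ ⟨a, ha, rfl⟩ ⟨b, hb, hab⟩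
    simp only [peel, List.cons.injEq, PTree.node.injEq] at hab
    have := congrArg List.length hab.1
    simp at this
    omega

theorem tsum_trees (w : ℕ → ℝ) (n : ℕ) (Q : PTree → Prop) (P : ℕ → Prop) [DecidablePred P]
    (hQ : ∀ t, Q t ↔ t.size = n + 1 ∧ P t.children.length) :
    ∑' t : {t : PTree // Q t}, t.1.weight w
      = ∑ k ∈ (range (n + 1)).filter P, w (k + 1) * f w n k := by
  classical
  have hset : {t : PTree | Q t} = 
     ((((range (n + 1)).filter P).biUnion fun k => (forests n k).image PTree.node : Finset PTree) : Set PTree) := by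
    ext t
    obtain ⟨ts⟩ := t
    have := len_le_fs ts
    simp only [Set.mem_ofPred_eq, hQ, size_node, PTree.children, coe_biUnion, Set.mem_iUnion,
      coe_image, Set.mem_image, mem_coe, mem_filter, mem_range, mem_forests, PTree.node.injEq,
      exists_eq_right, exists_prop]
    constructor
    · rintro ⟨h1, h2⟩
      have : fs ts = n := by unfold fs; omega
      exact ⟨ts.length, ⟨by omega, h2⟩, rfl, this⟩
    · rintro ⟨k, ⟨h1, h2⟩, rfl, h3⟩
      unfold fs at h3
      exact ⟨by omega, h2⟩
  change ∑' t : ({t : PTree | Q t} : Set PTree), t.1.weight w = _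
  rw [hset]
  erw [Finset.tsum_subtype' _ (PTree.weight w)]
  rw [sum_biUnion]
  · apply sum_congr rfl
    intro k _
    rw [sum_image (by intro a _ b _ h; simpa using h), f, mul_sum]
    apply sum_congr rfl
    intro l hl
    rw [mem_forests] at hl
    rw [weight_node, hl.1]; rfl
  · intro d _ d' _ hne
    simp only [Function.onFun, disjoint_left, mem_image, mem_forests]
    rintro _ ⟨a, ha, rfl⟩ ⟨b, hb, hab⟩
    simp only [PTree.node.injEq] at hab
    subst hab
    omega

def Om (n q : ℕ) : Finset (Fin n → ℕ) := Finset.Nat.antidiagonalTuple n q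

theorem mem_Om {n q : ℕ} (d : Fin n → ℕ) : d ∈ Om n q ↔ ∑ i, d i = q :=
  Finset.Nat.mem_antidiagonalTuple

def S (v : ℕ → ℝ) (n q : ℕ) : ℝ := ∑ d ∈ Om n q, ∏ i, v (d i)

theorem S_coord (v g : ℕ → ℝ) (n q : ℕ) (i : Fin (n + 1)) :
    ∑ d ∈ Om (n + 1) q, g (d i) * ∏ j, v (d j)
      = ∑ k ∈ range (q + 1), g k * v k * S v n (q - k) := by
  simp only [S, mul_sum]
  rw [sum_sigma']
  refine sum_bij' (fun d _ => ⟨d i, i.removeNth d⟩) (fun p _ => i.insertNth p.1 p.2) ?_ ?_ ?_ ?_ ?_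
  · intro d hd
    rw [mem_Om, Fin.sum_univ_succAbove _ i] at hd
    simp only [mem_sigma, mem_range, mem_Om, Fin.removeNth]
    omega
  · rintro ⟨k, d⟩ hd
    simp only [mem_sigma, mem_range, mem_Om] at hd
    rw [mem_Om, Fin.sum_univ_succAbove _ i]
    simp; omega
  · intro d hd; simp
  · rintro ⟨k, d⟩ hd; simp
  · intro d hd
    rw [Fin.prod_univ_succAbove _ i]
    simp [Fin.removeNth]; ring

theorem S_sym (v g : ℕ → ℝ) (n q : ℕ) :
    ∑ d ∈ Om (n + 1) q, (∑ i, g (d i)) * ∏ j, v (d j)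
      = (n + 1) * ∑ k ∈ range (q + 1), g k * v k * S v n (q - k) := by
  simp_rw [sum_mul]
  rw [sum_comm]
  simp [S_coord]

theorem S_succ (v : ℕ → ℝ) (n q : ℕ) :
    S v (n + 1) q = ∑ k ∈ range (q + 1), v k * S v n (q - k) := by
  have := S_coord v (fun _ => 1) n q 0
  simpa [S] using this

theorem S_mean (v : ℕ → ℝ) (n q : ℕ) :
    q * S v (n + 1) q = (n + 1) * ∑ k ∈ range (q + 1), k * v k * S v n (q - k) := by
  rw [← S_sym v (fun k => (k:ℝ)) n q, S, mul_sum]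
  apply sum_congr rfl
  intro d hd
  rw [mem_Om] at hd
  rw [← hd]; push_cast; rfl

/-- cycle lemma -/
theorem f_eq (w : ℕ → ℝ) (n k : ℕ) (hk : k ≤ n + 1) :
    (n + 1 : ℝ) * f w (n + 1) k = k * S (fun d => w (d + 1)) (n + 1) (n + 1 - k) := by
  induction n generalizing k with
  | zero =>
    match k, hk with
    | 0, _ => simp [f, forests]
    | 1, _ => 
      have h0 : f w 0 0 = 1 := by simp [f, forests, fw]
      have h1 : S (fun d => w (d + 1)) 0 0 = 1 := by simp [S, Om]
      rw [f_succ]; rw [S_succ]; simp [h0, h1]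
  | succ n ih =>
    match k, hk with
    | 0, _ => simp [f, forests]
    | k + 1, hk =>
      have hk' : k ≤ n + 1 := by omega
      obtain ⟨q, hq⟩ := Nat.exists_eq_add_of_le hk'
      set v : ℕ → ℝ := fun d => w (d + 1) with hv
      have e1 : f w (n + 1 + 1) (k + 1) = ∑ d ∈ range (q + 1), v d * f w (n + 1) (k + d) := by
        rw [f_succ]
        symm
        apply sum_subset
        · intro x; simp; omega
        · intro x _ hx
          rw [f_zero_of_lt, mul_zero]
          simp at hx; omega
      have e2 : (n + 1 : ℝ) * f w (n + 1 + 1) (k + 1)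
          = k * S v (n + 2) q + ∑ d ∈ range (q + 1), d * v d * S v (n + 1) (q - d) := by
        rw [e1, S_succ, mul_sum, mul_sum, ← sum_add_distrib]
        apply sum_congr rfl
        intro d hd
        simp only [mem_range] at hd
        have := ih (k + d) (by omega)
        have h3 : n + 1 - (k + d) = q - d := by omega
        rw [h3] at this
        push_cast at this
        linear_combination v d * this
      have e3 := S_mean v (n + 1) q
      have h4 : n + 1 + 1 - (k + 1) = q := by omega
      rw [h4]
      have hn : (n + 1 : ℝ) ≠ 0 := by positivity
      apply mul_left_cancel₀ hn
      have hq' : (n : ℝ) + 1 = k + q := by exact_mod_cast hq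
      push_cast at *
      have hq2 : (q : ℝ) = n + 1 - k := by linarith
      rw [hq2] at e3
      linear_combination (n + 2 : ℝ) * e2 - e3

theorem fact_low (k m : ℕ) :
    (k.factorial : ℝ) * ((k + m : ℕ) : ℝ) ^ m ≤ Real.exp 1 ^ m * ((k + m).factorial : ℝ) := by
  induction m with
  | zero => simp
  | succ m ih =>
    have key : ((k + m : ℕ) + 1 : ℝ) ^ m ≤ Real.exp 1 * ((k + m : ℕ) : ℝ) ^ m := by
      rcases Nat.eq_zero_or_pos (k + m) with h | h
      · have hm : m = 0 := by omega
        subst hm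
        simp
      · set x : ℝ := ((k + m : ℕ) : ℝ) with hx
        have hx0 : 0 < x := by rw [hx]; exact_mod_cast h
        have hmx : (m : ℝ) ≤ x := by rw [hx]; exact_mod_cast Nat.le_add_left m k
        have h1 : (1 + x⁻¹) ^ m ≤ Real.exp 1 := by
          calc (1 + x⁻¹) ^ m ≤ (Real.exp x⁻¹) ^ m := by
                gcongr; linarith [Real.add_one_le_exp x⁻¹]
            _ = Real.exp (m * x⁻¹) := by rw [← Real.exp_nat_mul]
            _ ≤ Real.exp 1 := by
                apply Real.exp_le_exp.2
                rw [← div_eq_mul_inv, div_le_one hx0]; exact hmx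
        calc (x + 1) ^ m = (1 + x⁻¹) ^ m * x ^ m := by
              rw [← mul_pow]; congr 1; field_simp
          _ ≤ _ := by gcongr
    have e : k + (m + 1) = (k + m) + 1 := by ring
    rw [e, Nat.factorial_succ]
    push_cast at *
    set x : ℝ := (k : ℝ) + m
    have hx0 : 0 ≤ x := by positivity
    calc (k.factorial : ℝ) * (x + 1) ^ (m + 1) = (k.factorial : ℝ) * ((x + 1) * (x + 1) ^ m) := by ring
      _ ≤ (k.factorial : ℝ) * ((x + 1) * (Real.exp 1 * x ^ m)) := by gcongr
      _ = (x + 1) * Real.exp 1 * ((k.factorial : ℝ) * x ^ m) := by ring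
      _ ≤ (x + 1) * Real.exp 1 * (Real.exp 1 ^ m * ((k + m).factorial : ℝ)) := by gcongr
      _ = _ := by ring

theorem fact_up (j : ℕ) :
    ((j + 1).factorial : ℝ) ≤ Real.exp 1 * (j + 1) * (((j + 1) / Real.exp 1) ^ (j + 1)) := by
  induction j with
  | zero => simp
  | succ j ih =>
    have he := Real.exp_pos 1
    set x : ℝ := (j : ℝ) + 1 with hx
    have hx0 : 0 < x := by positivity
    have key : Real.exp 1 * x ^ (j + 2) ≤ (x + 1) ^ (j + 2) := by
      have h1 : Real.exp (1 / (x + 1)) ≤ 1 + 1 / x := by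
        rw [← Real.le_log_iff_exp_le (by positivity)]
        have := Real.one_sub_inv_le_log_of_pos (x := 1 + 1 / x) (by positivity)
        refine le_trans (le_of_eq ?_) this
        field_simp; ring
      have h2 : Real.exp 1 ≤ (1 + 1 / x) ^ (j + 2) := by
        calc Real.exp 1 = (Real.exp (1 / (x + 1))) ^ (j + 2) := by
              rw [← Real.exp_nat_mul]; congr 1; push_cast; rw [hx]; field_simp; ring
          _ ≤ _ := by gcongr
      calc Real.exp 1 * x ^ (j + 2) ≤ (1 + 1 / x) ^ (j + 2) * x ^ (j + 2) := by gcongr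
        _ = _ := by rw [← mul_pow]; congr 1; field_simp
    rw [Nat.factorial_succ]
    push_cast
    rw [← hx]
    calc (x + 1) * ((j + 1).factorial : ℝ) ≤ (x + 1) * (Real.exp 1 * x * ((x / Real.exp 1) ^ (j + 1))) := by gcongr
      _ = (x + 1) * (Real.exp 1 * x ^ (j + 2)) / Real.exp 1 ^ (j + 1) := by
          rw [div_pow]; field_simp; try ring
      _ ≤ (x + 1) * (x + 1) ^ (j + 2) / Real.exp 1 ^ (j + 1) := by gcongr
      _ = _ := by rw [div_pow]; field_simp; try ring

/-- weights -/
def v (α : ℝ) (k : ℕ) : ℝ := (k.factorial : ℝ) ^ α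

def xx (α : ℝ) (n : ℕ) : ℝ := (3 * Real.exp 1 / 2 / n) ^ α

def qq (α : ℝ) : ℝ := (2 / 3 : ℝ) ^ α

theorem v_pos (α : ℝ) (k : ℕ) : 0 < v α k := by unfold v; positivity

theorem xx_pos (α : ℝ) (n : ℕ) (hn : 0 < n) : 0 < xx α n := by unfold xx; positivity

theorem qq_pos (α : ℝ) : 0 < qq α := by unfold qq; positivity

theorem v_low (α : ℝ) (h0 : 0 < α) (n k : ℕ) (hn : 0 < n) (hk : k ≤ n) :
    v α k ≤ v α n * qq α ^ (n - k) * xx α n ^ (n - k) := by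
  obtain ⟨m, rfl⟩ := Nat.exists_eq_add_of_le hk
  have hm : k + m - k = m := by omega
  rw [hm, mul_assoc, ← mul_pow]
  have hn' : (0:ℝ) < ((k + m : ℕ) : ℝ) := by exact_mod_cast hn
  have : qq α * xx α (k + m) = (Real.exp 1 / ((k + m : ℕ) : ℝ)) ^ α := by
    unfold qq xx
    rw [← Real.mul_rpow (by positivity) (by positivity)]
    congr 1; field_simp
  rw [this, ← Real.rpow_natCast, ← Real.rpow_mul (by positivity), mul_comm α, Real.rpow_mul (by positivity),
    Real.rpow_natCast]
  unfold v
  rw [← Real.mul_rpow (by positivity) (by positivity)]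
  apply Real.rpow_le_rpow (by positivity) _ h0.le
  rw [div_pow, mul_div_assoc', le_div_iff₀ (by positivity)]
  have := fact_low k m
  linarith

theorem v_x_le (α : ℝ) (h0 : 0 < α) (h1 : α < 1) (n j : ℕ) (hj : 2 * (j + 1) ≤ n) :
    v α (j + 1) * xx α n ^ (j + 1) ≤
      (2 * Real.exp 1 / n) ^ α * (((j + 1 : ℕ) : ℝ) ^ 2 * ((3 / 4 : ℝ) ^ α) ^ (j + 1)) := by
  have hn : (0:ℝ) < n := by exact_mod_cast (by omega : 0 < n)
  have he := Real.exp_pos 1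
  have hj' : 2 * ((j : ℝ) + 1) ≤ n := by exact_mod_cast hj
  have base : ((j + 1).factorial : ℝ) * (3 * Real.exp 1 / 2 / n) ^ (j + 1)
      ≤ (2 * Real.exp 1 / n) * ((((j : ℝ) + 1)) ^ 2 * (3 / 4 : ℝ) ^ (j + 1)) := by
    calc ((j + 1).factorial : ℝ) * (3 * Real.exp 1 / 2 / n) ^ (j + 1)
        ≤ (Real.exp 1 * (j + 1) * (((j + 1) / Real.exp 1) ^ (j + 1))) * (3 * Real.exp 1 / 2 / n) ^ (j + 1) := by
          gcongr; exact fact_up j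
      _ = Real.exp 1 * (j + 1) * (3 * (j + 1) / (2 * n)) ^ (j + 1) := by
          rw [mul_assoc, ← mul_pow]; congr 2; field_simp
      _ = Real.exp 1 * (j + 1) * (3 * (j + 1) / (2 * n)) * (3 * (j + 1) / (2 * n)) ^ j := by ring
      _ ≤ Real.exp 1 * (j + 1) * (3 * (j + 1) / (2 * n)) * (3 / 4) ^ j := by
          have : 3 * ((j:ℝ) + 1) / (2 * n) ≤ 3 / 4 := by
            rw [div_le_div_iff₀ (by positivity) (by positivity)]
            linarith
          gcongr
      _ = _ := by field_simp; ring
  have h2 := Real.rpow_le_rpow (by positivity) base h0.le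
  rw [Real.mul_rpow (by positivity) (by positivity), Real.mul_rpow (by positivity) (by positivity),
    Real.mul_rpow (by positivity) (by positivity)] at h2
  have sw : ∀ y : ℝ, 0 ≤ y → (y ^ (j + 1)) ^ α = (y ^ α) ^ (j + 1) := by
    intro y hy
    rw [← Real.rpow_natCast, ← Real.rpow_mul hy, mul_comm, Real.rpow_mul hy, Real.rpow_natCast]
  rw [sw _ (by positivity), sw _ (by positivity)] at h2
  unfold v xx
  refine h2.trans ?_
  gcongr
  push_cast
  have : (1:ℝ) ≤ ((j:ℝ) + 1) ^ 2 := by nlinarith [Nat.cast_nonneg (α := ℝ) j]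
  calc (((j:ℝ) + 1) ^ 2) ^ α ≤ (((j:ℝ) + 1) ^ 2) ^ (1:ℝ) := Real.rpow_le_rpow_of_exponent_le this h1.le
    _ = _ := Real.rpow_one _

def Phi (α : ℝ) (n : ℕ) : ℝ := ∑ j ∈ range (n / 2 + 1), v α j * xx α n ^ j

theorem Phi_le (α : ℝ) (h0 : 0 < α) (h1 : α < 1) :
    ∃ K : ℝ, 0 < K ∧ ∀ n : ℕ, 0 < n → Phi α n ^ n ≤ Real.exp (K * (n : ℝ) ^ (1 - α)) := by
  set r : ℝ := (3 / 4 : ℝ) ^ α with hr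
  have hr0 : 0 < r := by positivity
  have hr1 : r < 1 := Real.rpow_lt_one (by norm_num) (by norm_num) h0
  have hs : Summable (fun j : ℕ => (j : ℝ) ^ 2 * r ^ j) :=
    summable_pow_mul_geometric_of_norm_lt_one 2 (by rw [Real.norm_of_nonneg hr0.le]; exact hr1)
  set T := ∑' j : ℕ, (j : ℝ) ^ 2 * r ^ j with hT
  have hT0 : 0 ≤ T := tsum_nonneg fun j => by positivity
  have he := Real.exp_pos 1
  refine ⟨(2 * Real.exp 1) ^ α * (T + 1), by positivity, ?_⟩
  intro n hn
  have hn' : (0:ℝ) < n := by exact_mod_cast hn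
  have hx := xx_pos α n hn
  have step : Phi α n ≤ 1 + (2 * Real.exp 1 / n) ^ α * T := by
    unfold Phi
    rw [sum_range_succ', add_comm]
    have : v α 0 * xx α n ^ 0 = 1 := by simp [v]
    rw [this]
    gcongr
    calc ∑ j ∈ range (n / 2), v α (j + 1) * xx α n ^ (j + 1)
        ≤ ∑ j ∈ range (n / 2), (2 * Real.exp 1 / n) ^ α * (((j + 1 : ℕ) : ℝ) ^ 2 * r ^ (j + 1)) := by
          apply sum_le_sum
          intro j hj
          rw [mem_range] at hj
          exact v_x_le α h0 h1 n j (by omega)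
      _ = (2 * Real.exp 1 / n) ^ α * ∑ j ∈ range (n / 2), (((j + 1 : ℕ) : ℝ) ^ 2 * r ^ (j + 1)) := by
          rw [mul_sum]
      _ ≤ (2 * Real.exp 1 / n) ^ α * T := by
          gcongr
          have h2 := sum_range_succ' (fun j : ℕ => (j : ℝ) ^ 2 * r ^ j) (n / 2)
          have h3 := hs.sum_le_tsum (range (n / 2 + 1)) (fun j _ => by positivity)
          simp only [Nat.cast_zero] at h2
          linarith
  have hP : 0 ≤ Phi α n := sum_nonneg fun j _ => mul_nonneg (v_pos α j).le (by positivity)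
  calc Phi α n ^ n ≤ (1 + (2 * Real.exp 1 / n) ^ α * T) ^ n := by gcongr
    _ ≤ (Real.exp ((2 * Real.exp 1 / n) ^ α * T)) ^ n := by
        gcongr; linarith [Real.add_one_le_exp ((2 * Real.exp 1 / n) ^ α * T)]
    _ = Real.exp (n * ((2 * Real.exp 1 / n) ^ α * T)) := by rw [← Real.exp_nat_mul]
    _ ≤ _ := by
        apply Real.exp_le_exp.2
        rw [Real.div_rpow (by positivity) (by positivity), Real.rpow_sub hn', Real.rpow_one]
        have : (0:ℝ) < (n:ℝ) ^ α := by positivity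
        calc (n:ℝ) * ((2 * Real.exp 1) ^ α / (n:ℝ) ^ α * T)
            = (2 * Real.exp 1) ^ α * T * (n / (n:ℝ) ^ α) := by ring
          _ ≤ _ := by gcongr; linarith

theorem bad_le (α : ℝ) (h0 : 0 < α) (n : ℕ) (hn : 0 < n) (P : ℕ → Prop) [DecidablePred P] :
    ∑ d ∈ (Om (n + 1) n).filter (fun d => ∀ i, P (d i)), ∏ i, v α (d i)
      ≤ (n + 1) * (v α n * ((∑ k ∈ (range (n + 1)).filter P, qq α ^ (n - k)) * Phi α n ^ n)) := by
  classical
  have hx := xx_pos α n hn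
  have hq := qq_pos α
  set G : Fin (n + 1) → Fin (n + 1) → ℕ → ℝ :=
    fun i j k => if j = i then qq α ^ (n - k) else v α k * xx α n ^ k with hG
  set t : Fin (n + 1) → Fin (n + 1) → Finset ℕ :=
    fun i j => if j = i then (range (n + 1)).filter P else range (n / 2 + 1) with ht
  have hG0 : ∀ i j k, 0 ≤ G i j k := by
    intro i j k
    simp only [hG]
    split_ifs
    · positivity
    · exact mul_nonneg (v_pos α k).le (by positivity)
  have hp0 : ∀ i (d : Fin (n + 1) → ℕ), 0 ≤ v α n * ∏ j, G i j (d j) := fun i d =>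
    mul_nonneg (v_pos α n).le (prod_nonneg fun j _ => hG0 i j _)
  have main : ∀ d ∈ (Om (n + 1) n).filter (fun d => ∀ i, P (d i)),
      ∏ i, v α (d i) ≤ ∑ i, if d ∈ Fintype.piFinset (t i) then v α n * ∏ j, G i j (d j) else 0 := by
    intro d hd
    rw [mem_filter, mem_Om] at hd
    obtain ⟨hsum, hP⟩ := hd
    obtain ⟨i, -, hi⟩ := exists_max_image (univ : Finset (Fin (n + 1))) d univ_nonempty
    have hsum' := hsum
    rw [Fin.sum_univ_succAbove _ i] at hsum'
    have hmem : d ∈ Fintype.piFinset (t i) := by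
      rw [Fintype.mem_piFinset]
      intro j
      simp only [ht]
      split_ifs with hji
      · subst hji
        simp only [mem_filter, mem_range]
        exact ⟨by omega, hP _⟩
      · have h1 := hi j (mem_univ j)
        obtain ⟨j', rfl⟩ := Fin.exists_succAbove_eq hji
        have h2 := single_le_sum (f := fun j => d (i.succAbove j)) (fun _ _ => Nat.zero_le _) (mem_univ j')
        simp only [mem_range]
        omega
    refine le_trans ?_ (single_le_sum (f := fun i => if d ∈ Fintype.piFinset (t i) then v α n * ∏ j, G i j (d j) else 0) ?_ (mem_univ i))
    · simp only [if_pos hmem]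
      rw [Fin.prod_univ_succAbove _ i, Fin.prod_univ_succAbove _ i]
      simp only [hG, if_true, Fin.succAbove_ne, if_false]
      rw [prod_mul_distrib, prod_pow_eq_pow_sum]
      have e : ∑ j, d (i.succAbove j) = n - d i := by omega
      rw [e]
      have h3 := v_low α h0 n (d i) hn (by omega)
      have h4 : 0 ≤ ∏ j, v α (d (i.succAbove j)) := prod_nonneg fun j _ => (v_pos α _).le
      calc v α (d i) * ∏ j, v α (d (i.succAbove j)) 
          ≤ (v α n * qq α ^ (n - d i) * xx α n ^ (n - d i)) * ∏ j, v α (d (i.succAbove j)) := by gcongr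
        _ = _ := by ring
    · intro i _
      split_ifs
      · exact hp0 i d
      · exact le_rfl
  calc _ ≤ ∑ d ∈ (Om (n + 1) n).filter (fun d => ∀ i, P (d i)), ∑ i, 
            (if d ∈ Fintype.piFinset (t i) then v α n * ∏ j, G i j (d j) else 0) := sum_le_sum main
    _ = ∑ i, ∑ d ∈ (Om (n + 1) n).filter (fun d => ∀ i, P (d i)), 
            (if d ∈ Fintype.piFinset (t i) then v α n * ∏ j, G i j (d j) else 0) := sum_comm
    _ ≤ ∑ i, ∑ d ∈ Fintype.piFinset (t i), v α n * ∏ j, G i j (d j) := by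
        apply sum_le_sum
        intro i _
        rw [← sum_filter]
        apply sum_le_sum_of_subset_of_nonneg
        · intro d hd; exact (mem_filter.1 hd).2
        · intro d _ _; exact hp0 i d
    _ = ∑ i : Fin (n + 1), v α n * ((∑ k ∈ (range (n + 1)).filter P, qq α ^ (n - k)) * Phi α n ^ n) := by
        apply sum_congr rfl
        intro i _
        rw [← mul_sum, ← prod_univ_sum, Fin.prod_univ_succAbove _ i]
        simp [hG, ht, Fin.succAbove_ne, Phi]
    _ = _ := by simp

theorem S_zero (α : ℝ) (n : ℕ) : S (v α) n 0 = 1 := by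
  unfold S
  have : Om n 0 = {0} := by
    ext d
    rw [mem_Om, mem_singleton, Finset.sum_eq_zero_iff]
    simp [funext_iff]
  rw [this]
  simp [v]

theorem S_nonneg (α : ℝ) (n q : ℕ) : 0 ≤ S (v α) n q :=
  sum_nonneg fun d _ => prod_nonneg fun j _ => (v_pos α _).le

theorem S_low (α : ℝ) (n : ℕ) (hn : 0 < n) : (n + 1) * v α n ≤ S (v α) (n + 1) n := by
  have h := S_mean (v α) n n
  have hn' : (0:ℝ) < n := by exact_mod_cast hn
  have h2 := single_le_sum (f := fun k : ℕ => (k:ℝ) * v α k * S (v α) n (n - k)) (s := range (n + 1))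
    (fun k _ => mul_nonneg (mul_nonneg (Nat.cast_nonneg k) (v_pos α k).le) (S_nonneg α _ _))
    (mem_range.2 (Nat.lt_succ_self n))
  simp only [Nat.sub_self, S_zero, mul_one] at h2
  refine le_of_mul_le_mul_left ?_ hn'
  rw [h]
  calc (n:ℝ) * ((n + 1) * v α n) = (n + 1) * (n * v α n) := by ring
    _ ≤ _ := by gcongr

theorem nu_le (α : ℝ) (n : ℕ) (R : ℝ) (hR : 0 ≤ R) (P : ℕ → Prop) [DecidablePred P]
    (hP : ∀ k, ¬ P k → (n : ℝ) - k ≤ R) (Q : PTree → Prop)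
    (hn : 0 < n) (hQ : ∀ t, Q t ↔ P t.children.length) :
    nu (fun n => ((n - 1).factorial : ℝ) ^ α) (n + 1) Q ≤
      R / n + (∑ d ∈ (Om (n + 1) n).filter (fun d => ∀ i, P (d i)), ∏ i, v α (d i)) / S (v α) (n + 1) n := by
  set w : ℕ → ℝ := fun n => ((n - 1).factorial : ℝ) ^ α with hw
  have hwv : (fun d => w (d + 1)) = v α := by
    funext d; simp [hw, v]
  have hwv' : ∀ d, w (d + 1) = v α d := fun d => congrFun hwv d
  have hn' : (0:ℝ) < n := by exact_mod_cast hn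
  have hS : 0 < S (v α) (n + 1) n :=
    lt_of_lt_of_le (mul_pos (by positivity) (v_pos α n)) (S_low α n hn)
  have hD : Zfun w (n + 1) = S (v α) (n + 1) n / (n + 1) := by
    unfold Zfun
    rw [tsum_trees w n (fun t => t.size = n + 1) (fun _ => True) (by simp)]
    have h1 := f_succ w n 0
    have h2 := f_eq w n 1 (by omega)
    simp only [zero_add] at h1
    rw [filter_true, ← h1, eq_div_iff (by positivity)]
    rw [hwv] at h2
    simp at h2
    linarith
  unfold nu
  rw [hD, tsum_trees w n (fun t => t.size = n + 1 ∧ Q t) P (by simp [hQ])]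
  set g : ℕ → ℝ := fun k => if P k then (k:ℝ) else 0 with hg
  set B := ∑ d ∈ (Om (n + 1) n).filter (fun d => ∀ i, P (d i)), ∏ i, v α (d i) with hB
  have hT : (n : ℝ) * ∑ k ∈ (range (n + 1)).filter P, w (k + 1) * f w n k
      = ∑ k ∈ range (n + 1), g k * v α k * S (v α) n (n - k) := by
    rw [sum_filter, mul_sum]
    apply sum_congr rfl
    intro k hk
    rw [mem_range] at hk
    simp only [hg]
    split_ifs
    · obtain ⟨m, rfl⟩ : ∃ m, n = m + 1 := ⟨n - 1, by omega⟩
      have := f_eq w m k (by omega)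
      rw [hwv] at this
      rw [hwv']
      push_cast
      linear_combination v α k * this
    · simp
  have hsym := S_sym (v α) g n n
  rw [← hT] at hsym
  have hup : ∑ d ∈ Om (n + 1) n, (∑ i, g (d i)) * ∏ j, v α (d j) ≤ R * S (v α) (n + 1) n + n * B := by
    rw [S, hB, sum_filter, mul_sum, mul_sum, ← sum_add_distrib]
    apply sum_le_sum
    intro d hd
    rw [mem_Om] at hd
    have hW : 0 ≤ ∏ j, v α (d j) := prod_nonneg fun j _ => (v_pos α _).le
    have hgle : ∀ k, g k ≤ k := by
      intro k; simp only [hg]; split_ifs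
      · exact le_rfl
      · positivity
    have hd' : ∑ i, (d i : ℝ) = n := by exact_mod_cast hd
    split_ifs with hall
    · have : ∑ i, g (d i) ≤ n := by
        rw [← hd']; exact sum_le_sum fun i _ => hgle _
      have h5 : 0 ≤ R * ∏ j, v α (d j) := mul_nonneg hR hW
      have h6 := mul_le_mul_of_nonneg_right this hW
      linarith
    · push Not at hall
      obtain ⟨i, hi⟩ := hall
      have h7 := hP _ hi
      rw [Fin.sum_univ_succAbove _ i] at hd'
      have : ∑ i, g (d i) ≤ R := by
        rw [Fin.sum_univ_succAbove _ i]
        have h8 : g (d i) = 0 := by simp [hg, hi]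
        have h9 : ∑ j, g (d (i.succAbove j)) ≤ ∑ j, (d (i.succAbove j) : ℝ) :=
          sum_le_sum fun j _ => hgle _
        linarith
      have h6 := mul_le_mul_of_nonneg_right this hW
      linarith
  rw [hsym] at hup
  rw [div_add_div _ _ hn'.ne' hS.ne', div_div_eq_mul_div, div_le_div_iff₀ hS (by positivity)]
  set T := ∑ k ∈ (range (n + 1)).filter P, w (k + 1) * f w n k
  calc T * (n + 1) * (n * S (v α) (n + 1) n) = ((n + 1) * (n * T)) * S (v α) (n + 1) n := by ring
    _ ≤ _ := by gcongr

theorem main (α : ℝ) (h0 : 0 < α) (h1 : α < 1) : ∃ C : ℝ, 0 < C ∧ ∀ N : ℕ, 2 ≤ N →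
      nu (fun n => ((n - 1).factorial : ℝ) ^ α) N
        (fun t => C * (N : ℝ) ^ (1 - α) < (N : ℝ) - ((t.children.length : ℝ) + 1)) ≤
        2 * C * (N : ℝ) ^ (-α) + N * Real.exp (- (N : ℝ) ^ (1 - α)) := by
  classical
  obtain ⟨K, hK, hPhi⟩ := Phi_le α h0 h1
  have hq0 := qq_pos α
  have hq1 : qq α < 1 := Real.rpow_lt_one (by norm_num) (by norm_num) h0
  have hlog : Real.log (qq α) < 0 := Real.log_neg hq0 hq1
  set C : ℝ := (K + 1) / (- Real.log (qq α)) with hC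
  have hC0 : 0 < C := div_pos (by linarith) (by linarith)
  have hCl : Real.log (qq α) * C = -(K + 1) := by
    have := hlog.ne
    rw [hC]; field_simp
  refine ⟨C, hC0, ?_⟩
  intro N hN
  obtain ⟨n, rfl⟩ : ∃ n, N = n + 1 := ⟨N - 1, by omega⟩
  have hn : 0 < n := by omega
  have hn' : (1:ℝ) ≤ n := by exact_mod_cast hn
  set M : ℝ := ((n + 1 : ℕ) : ℝ) ^ (1 - α) with hM
  have hM0 : 0 < M := by positivity
  set P : ℕ → Prop := fun k => C * M < n - k with hPdef
  have hle := nu_le α n (C * M) (by positivity) P (by intro k hk; simpa [hPdef] using hk)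
    (fun t => C * M < ((n + 1 : ℕ) : ℝ) - ((t.children.length : ℝ) + 1)) hn (by
      intro t; simp only [hPdef]; push_cast
      rw [add_sub_add_right_eq_sub])
  refine hle.trans ?_
  have hv := v_pos α n
  have hS := S_low α n hn
  have hS0 : 0 < S (v α) (n + 1) n := lt_of_lt_of_le (by positivity) hS
  gcongr ?_ + ?_
  · have e : ((n + 1 : ℕ) : ℝ) ^ (-α) = M / (n + 1 : ℕ) := by
      rw [hM, eq_div_iff (by positivity), ← Real.rpow_add_one (by positivity)]
      congr 1; ring
    rw [e, mul_div_assoc', div_le_div_iff₀ (by positivity) (by positivity)]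
    push_cast
    have : 0 < C * M := by positivity
    nlinarith
  · rw [div_le_iff₀ hS0]
    refine (bad_le α h0 n hn P).trans ?_
    have hsum : ∑ k ∈ (range (n + 1)).filter P, qq α ^ (n - k) ≤ (n + 1) * Real.exp (-(K + 1) * M) := by
      calc _ ≤ ∑ k ∈ (range (n + 1)).filter P, Real.exp (-(K + 1) * M) := by
            apply sum_le_sum
            intro k hk
            simp only [mem_filter, mem_range, hPdef] at hk
            rw [← Real.rpow_natCast, Real.rpow_def_of_pos hq0]
            apply Real.exp_le_exp.2
            rw [Nat.cast_sub (by omega), ← hCl, mul_assoc]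
            exact mul_le_mul_of_nonpos_left hk.2.le hlog.le
        _ ≤ ∑ k ∈ range (n + 1), Real.exp (-(K + 1) * M) := by
            apply sum_le_sum_of_subset_of_nonneg (filter_subset _ _)
            intros; positivity
        _ = _ := by simp
    have hPh : Phi α n ^ n ≤ Real.exp (K * M) := by
      refine (hPhi n hn).trans (Real.exp_le_exp.2 ?_)
      rw [hM]
      gcongr
      simp
    have hx := xx_pos α n hn
    have hP0 : 0 ≤ Phi α n := sum_nonneg fun j _ => mul_nonneg (v_pos α j).le (by positivity)
    calc ((n:ℝ) + 1) * (v α n * ((∑ k ∈ (range (n + 1)).filter P, qq α ^ (n - k)) * Phi α n ^ n))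
        ≤ ((n:ℝ) + 1) * (v α n * (((n + 1) * Real.exp (-(K + 1) * M)) * Real.exp (K * M))) := by gcongr
      _ = ((n + 1 : ℕ) : ℝ) * Real.exp (-M) * ((n + 1) * v α n) := by
          have : Real.exp (-M) = Real.exp (-(K + 1) * M) * Real.exp (K * M) := by
            rw [← Real.exp_add]; congr 1; ring
          rw [this]; push_cast; ring
      _ ≤ _ := by gcongr

theorem lim (α C : ℝ) (h0 : 0 < α) (h1 : α < 1) :
    Tendsto (fun N : ℕ => 2 * C * (N : ℝ) ^ (-α) + N * Real.exp (- (N : ℝ) ^ (1 - α))) atTop (nhds 0) := by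
  have a1 : Tendsto (fun N : ℕ => 2 * C * (N : ℝ) ^ (-α)) atTop (nhds (2 * C * 0)) :=
    ((tendsto_rpow_neg_atTop h0).comp tendsto_natCast_atTop_atTop).const_mul _
  have a2 := (tendsto_rpow_mul_exp_neg_mul_atTop_nhds_zero (1 / (1 - α)) 1 one_pos).comp
    ((tendsto_rpow_atTop (by linarith : 0 < 1 - α)).comp (tendsto_natCast_atTop_atTop (R := ℝ)))
  have a3 : Tendsto (fun N : ℕ => (N:ℝ) * Real.exp (- (N : ℝ) ^ (1 - α))) atTop (nhds 0) := by
    refine a2.congr ?_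
    intro N
    simp only [Function.comp]
    rw [← Real.rpow_mul (by positivity), mul_one_div_cancel (by linarith), Real.rpow_one, neg_one_mul]
  simpa using a1.add a3
end P13
end
/-- Theorem 3 (i): with `w_n = ((n−1)!)^α`, `0 < α < 1`, the degree `σ(s) = #children(s)+1`
satisfies `σ(s) = N − O_p(N^{1−α})`: `(N − σ(s))/N^{1−α}` is bounded in probability. -/
theorem stmt_13 (α : ℝ) (h0 : 0 < α) (h1 : α < 1) :
    ∀ ε : ℝ, 0 < ε → ∃ C : ℝ, 0 < C ∧ ∀ᶠ N : ℕ in atTop,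
      nu (fun n => ((n - 1).factorial : ℝ) ^ α) N
        (fun t => C * (N : ℝ) ^ (1 - α) < (N : ℝ) - ((t.children.length : ℝ) + 1)) < ε := by
  obtain ⟨C, hC, h⟩ := P13.main α h0 h1
  intro ε hε
  refine ⟨C, hC, ?_⟩
  filter_upwards [(P13.lim α C h0 h1).eventually_lt_const hε, eventually_ge_atTop 2] with N hN hN2
  exact (h N hN2).trans_lt hN
end
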